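/- Let R be a standard graded domain which is a finitely generated ℤ-algebra of characteristic 0, and let I ⊂ R be a homogeneous ideal of finite colength, such that for almost all primes p the fiber R_p = R ⊗_ℤ ℤ/pℤ is a standard graded ring of dimension d which is geometrically integral and I_p ⊂ R_p is a homogeneous ideal of finite colength. Then for any fixed m ≥ d−1, lim_{p→∞} [ e_{HK}(R_p, I_p) − ℓ(R_p/I_p^{[p^m]}) / p^{md} ] = 0. In particular, for any fixed m ≥ d−1, the limit e_{HK}^∞(R, I) := lim_{p→∞} e_{HK}(R_p, I_p) exists if and only if lim_{p→∞} ℓ(R_p/I_p^{[p^m]}) / p^{md} exists, and when they exist the two limits are equal. -/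

import Mathlib

/-!
The proof bounds, uniformly in `p`, how fast the normalised colengths
`a_n = ℓ(R_p/I_p^{[p^n]}) / p^{nd}` converge. The key estimate is `|a_{n+1} - a_n| ≤ C / p^n` for all
`n`, with a constant `C` not depending on the (large) prime `p`
(`exists_uniform_colength_bound`). Summing the geometric series gives
`|e_HK(R_p, I_p) - a_m| ≤ 2 C / p` for `m ≥ 1`, which tends to `0`; the equivalence of the two limits
follows formally.

For the estimate, `R` is normalised over `ℤ[1/N]`: there are `d` algebraically independent elements
`z` over which suitable generators of `R[1/N]` are integral (`exists_noether_int`), and their minimal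
polynomials are separable since the characteristic is `0`. Let `c` be the product of the
discriminants. Modulo a large prime the same data normalise the fibre `A = R_p`, and `c` stays
nonzero. Cramer's rule, applied to the matrix expressing `1, w^p, w^{2p}, …` in powers of a
generator `w`, shows `c^p A ⊆ ∑_α A^p z^α`, the sum over exponent vectors with entries `< p`
(`disc_pow_smul_mem`, `prod_disc_pow_mul_mem`). So the additive map
`A^{p^d} → A, (a_α) ↦ ∑ a_α^p z^α` (`frobMap`) has cokernel killed by `c^p`, and comparison of
dimensions over the fraction fields shows that it is injective (`frobMap_varImage_injective`).
Consequently, for every ideal `J` of finite colength, `ℓ(A/J^{[p]})` exceeds `p^d ℓ(A/J)` by at most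
`p ℓ(A/(J^{[p]} + c))` and falls short of it by at most `p^d ℓ(A/(J + c))`.

It remains to see `ℓ(A/(I_p^{[q]} + c)) ≤ C q^{d-1}` uniformly. The ring `R/(c)` is integral, up to
denominators, over a polynomial ring in at most `d - 1` variables, because its fibres have
dimension `< d`; and `R/I` is integral over `ℤ[1/N]` because its fibres are finite. Both sets of
integral equations live over `ℤ`, so their degrees do not depend on `p`, and they bound the colength
by counting monomials (`finrank_le_of_relations`).
-/

/-!
Statement 4 (Corollary 1.2(2)): for a standard graded domain `R` which is a
finitely generated `ℤ`-algebra of characteristic `0` and a homogeneous ideal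
`I ⊂ R` of finite colength whose fibers `(R_p, I_p)` are standard graded of
dimension `d`, geometrically integral and of finite colength for almost all
primes `p`: for any fixed `m ≥ d − 1`,
`lim_{p→∞} [e_HK(R_p, I_p) − ℓ(R_p/I_p^{[pᵐ]})/p^{md}] = 0`; in particular
`e_HK^∞(R,I) := lim_{p→∞} e_HK(R_p, I_p)` exists iff
`lim_{p→∞} ℓ(R_p/I_p^{[pᵐ]})/p^{md}` exists, and then the two limits coincide.
-/

open Filter

/-- The Frobenius power `I^{[q]}`: the ideal generated by `q`-th powers of
elements of `I`. -/
def Ideal.frobeniusPower {R : Type*} [CommRing R] (I : Ideal R) (q : ℕ) : Ideal R :=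
  Ideal.span ((fun x => x ^ q) '' (I : Set R))

/-- The fiber `R_p = R ⊗_ℤ ℤ/pℤ`, realized as `R ⧸ (p)`. -/
abbrev modPFiber (R : Type*) [CommRing R] (p : ℕ) : Type _ :=
  R ⧸ (Ideal.span {(p : R)} : Ideal R)

/-- The image `I_p` of an ideal `I ⊆ R` in the fiber `R_p`. -/
def modPFiberIdeal {R : Type*} [CommRing R] (I : Ideal R) (p : ℕ) :
    Ideal (modPFiber R p) :=
  I.map (Ideal.Quotient.mk _)

open Classical in
/-- The colength `ℓ(R_p/J)` of an ideal `J` in the fiber `R_p`, i.e. its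
length as a `ℤ/pℤ`-module (junk value `0` if `R_p` does not have
characteristic `p`). -/
noncomputable def fiberColength {R : Type*} [CommRing R] (p : ℕ)
    (J : Ideal (modPFiber R p)) : ℕ :=
  if h : CharP (modPFiber R p) p then
    letI := h
    letI : Algebra (ZMod p) (modPFiber R p) := ZMod.algebra _ p
    Module.finrank (ZMod p) (modPFiber R p ⧸ J)
  else 0

/-- The fiber `R_p` is geometrically integral, i.e. `R_p ⊗ \bar𝔽_p` is a
domain. -/
def ModPFiberGeomIntegral (R : Type*) [CommRing R] (p : ℕ) [Fact p.Prime]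
    [CharP (modPFiber R p) p] : Prop :=
  letI : Algebra (ZMod p) (modPFiber R p) := ZMod.algebra _ p
  IsDomain (TensorProduct (ZMod p) (AlgebraicClosure (ZMod p)) (modPFiber R p))

/-- Convergence of `g p` to `L` as the prime `p` tends to infinity. -/
def TendstoPrimes (g : ℕ → ℝ) (L : ℝ) : Prop :=
  ∀ ε : ℝ, 0 < ε → ∃ N : ℕ, ∀ p : ℕ, p.Prime → N ≤ p → |g p - L| < ε

section HilbertKunz
open Polynomial

/-! ### Discriminants and `p`-th powers -/

lemma exists_fin_enum {α : Type*} (m : Multiset α) (r : ℕ) (h : Multiset.card m = r) :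
    ∃ θ : Fin r → α, m = Finset.univ.val.map θ := by
  subst h
  obtain ⟨l, hl⟩ : ∃ l : List α, (l : Multiset α) = m := ⟨m.toList, m.coe_toList⟩
  subst hl
  refine ⟨fun i => l.get (i.cast (by simp)), ?_⟩
  have := Fin.univ_val_map l.get
  rw [List.ofFn_get] at this
  exact this.symm

/-- Reduction of an arbitrary power of a root of a monic polynomial `g` modulo `g`. -/
lemma pow_eq_sum_modByMonic {S T : Type*} [CommRing S] [IsDomain S] [CommRing T] [Algebra S T]
    (g : S[X]) (hg : g.Monic) (t : T) (ht : aeval t g = 0) (n : ℕ) :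
    t ^ n = ∑ k : Fin g.natDegree, ((X ^ n : S[X]) %ₘ g).coeff k • t ^ (k : ℕ) := by
  have h1 : aeval t ((X ^ n : S[X]) %ₘ g) = t ^ n := by
    have := congrArg (aeval t) (modByMonic_add_div (X ^ n : S[X]) g)
    simpa [ht] using this
  by_cases h0 : g = 1
  · have : Subsingleton T := by
      rw [h0, map_one] at ht
      exact subsingleton_of_zero_eq_one ht.symm
    exact Subsingleton.elim _ _
  rw [← h1, aeval_eq_sum_range' (natDegree_modByMonic_lt _ hg h0), Finset.sum_range]

/-- The resultant of `∏ (X - θ i)` with its derivative is, up to sign, the squared Vandermonde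
determinant of the `θ i`. -/
lemma resultant_derivative_eq_vandermonde {K : Type*} [Field K] {r : ℕ} (g : K[X]) (hg : g.Monic)
    (θ : Fin r → K) (hθ : g.roots = Finset.univ.val.map θ) (hs : g.Splits) :
    ∃ ε : ℕ, resultant g g.derivative g.natDegree (g.natDegree - 1) =
      (-1) ^ ε * (Matrix.vandermonde θ).det ^ 2 := by
  rw [resultant_eq_prod_eval _ _ _ (natDegree_derivative_le g) hs, hθ, hg.leadingCoeff, one_pow,
    one_mul, Multiset.map_map]
  have hg' : g = ∏ i, (X - C (θ i)) := by
    conv_lhs => rw [hs.eq_prod_roots_of_monic hg, hθ, Multiset.map_map]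
    rfl
  have key : ∀ i, eval (θ i) g.derivative = ∏ j ∈ Finset.univ.erase i, (θ i - θ j) := by
    intro i
    rw [hg', derivative_prod_finset]
    simp only [derivative_sub, derivative_X, derivative_C, sub_zero, mul_one, eval_finsetSum,
      eval_prod, eval_sub, eval_X, eval_C]
    rw [Finset.sum_eq_single i]
    · intro b _ hb
      exact Finset.prod_eq_zero (Finset.mem_erase.2 ⟨hb.symm, Finset.mem_univ _⟩) (sub_self _)
    · simp
  have h1 : (Multiset.map ((fun x => eval x g.derivative) ∘ θ) Finset.univ.val).prod =
      ∏ i, eval (θ i) g.derivative := rfl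
  rw [h1, Finset.prod_congr rfl (fun i _ => key i), Matrix.det_vandermonde]
  have h2 : ∀ i : Fin r, ∏ j ∈ Finset.univ.erase i, (θ i - θ j) =
      (∏ j ∈ Finset.Ioi i, (θ i - θ j)) * ∏ j ∈ Finset.Iio i, (θ i - θ j) := by
    intro i
    rw [← Finset.prod_union]
    · refine Finset.prod_congr ?_ (fun _ _ => rfl)
      ext j
      simp only [Finset.mem_erase, Finset.mem_univ, and_true, Finset.mem_union, Finset.mem_Ioi,
        Finset.mem_Iio]
      exact ⟨fun h => (lt_or_gt_of_ne h).symm, fun h => h.elim (fun h => h.ne') (fun h => h.ne)⟩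
    · rw [Finset.disjoint_left]
      intro a ha hb
      simp only [Finset.mem_Ioi, Finset.mem_Iio] at ha hb
      exact absurd ha (not_lt.2 hb.le)
  have h3 : ∏ i : Fin r, ∏ j ∈ Finset.Iio i, (θ i - θ j) =
      ∏ i : Fin r, ∏ j ∈ Finset.Ioi i, (θ j - θ i) := by
    exact Finset.prod_comm' (by simp)
  have h4 : ∏ i : Fin r, ∏ j ∈ Finset.Ioi i, (θ i - θ j) =
      (-1) ^ (∑ i : Fin r, (Finset.Ioi i).card) * ∏ i : Fin r, ∏ j ∈ Finset.Ioi i, (θ j - θ i) := by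
    rw [← Finset.prod_pow_eq_pow_sum, ← Finset.prod_mul_distrib]
    refine Finset.prod_congr rfl fun i _ => ?_
    rw [← Finset.prod_const, ← Finset.prod_mul_distrib]
    exact Finset.prod_congr rfl fun j _ => by ring
  refine ⟨∑ i : Fin r, (Finset.Ioi i).card, ?_⟩
  rw [Finset.prod_congr rfl (fun i _ => h2 i), Finset.prod_mul_distrib, h3, h4, mul_assoc, sq]

/-- Cramer's rule for the matrix `M` expressing `1, w^p, w^{2p}, …` through `1, w, w^2, …`:
`(det M)² · D = ± D^p` where `D` is the discriminant, so `D^p` carries every power of `w` into the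
span of the `p`-th powers of powers of `w`. -/
lemma disc_pow_smul_mem {p : ℕ} [Fact p.Prime] {S W : Type*} [CommRing S] [IsDomain S] [CharP S p]
    [CommRing W] [Algebra S W] (g : S[X]) (hg : g.Monic) (w : W) (hw : aeval w g = 0) (j : ℕ) :
    (resultant g g.derivative g.natDegree (g.natDegree - 1)) ^ p • w ^ j ∈
      Submodule.span S (Set.range fun i : ℕ => (w ^ i) ^ p) := by
  set D := resultant g g.derivative g.natDegree (g.natDegree - 1) with hD
  set E := Submodule.span S (Set.range fun i : ℕ => (w ^ i) ^ p) with hE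
  set r := g.natDegree with hr
  let M : Matrix (Fin r) (Fin r) S := fun i k => ((X ^ (p * i) : S[X]) %ₘ g).coeff k
  -- `det M` kills the low powers modulo `E`
  have cram : ∀ k : Fin r, M.det • w ^ (k : ℕ) ∈ E := by
    intro k
    have : M.det • w ^ (k : ℕ) = ∑ i, M.adjugate k i • (w ^ (i : ℕ)) ^ p := by
      have e1 : ∀ i : Fin r, (w ^ (i : ℕ)) ^ p = ∑ l, M i l • w ^ (l : ℕ) := by
        intro i
        rw [← pow_mul, mul_comm]
        exact pow_eq_sum_modByMonic g hg w hw _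
      simp_rw [e1, Finset.smul_sum, smul_smul]
      rw [Finset.sum_comm]
      simp_rw [← Finset.sum_smul, ← Matrix.mul_apply, Matrix.adjugate_mul, Matrix.smul_apply,
        Matrix.one_apply]
      simp
    rw [this]
    exact Submodule.sum_mem _ fun i _ => Submodule.smul_mem _ _ (Submodule.subset_span ⟨_, rfl⟩)
  have all : ∀ n, M.det • w ^ n ∈ E := by
    intro n
    rw [pow_eq_sum_modByMonic g hg w hw n, Finset.smul_sum]
    refine Submodule.sum_mem _ fun i _ => ?_
    rw [smul_comm]
    exact Submodule.smul_mem _ _ (cram i)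
  -- the identity `D^p = ± (det M)² D`, checked on the roots
  have hdvd : M.det ∣ D ^ p := by
    by_cases hD0 : D = 0
    · rw [hD0, zero_pow (Fact.out : p.Prime).ne_zero]
      exact dvd_zero _
    let K := AlgebraicClosure (FractionRing S)
    have hinj : Function.Injective (algebraMap S K) := by
      rw [IsScalarTower.algebraMap_eq S (FractionRing S) K]
      exact (algebraMap (FractionRing S) K).injective.comp (IsFractionRing.injective S _)
    have : CharP K p := charP_of_injective_algebraMap hinj p
    have hgK := hg.map (algebraMap S K)
    have hs : (g.map (algebraMap S K)).Splits := IsAlgClosed.splits _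
    have hdeg : (g.map (algebraMap S K)).natDegree = r := hg.natDegree_map _
    obtain ⟨θ, hθ⟩ := exists_fin_enum (g.map (algebraMap S K)).roots r
      (by rw [← hs.natDegree_eq_card_roots, hdeg])
    obtain ⟨ε, hε⟩ := resultant_derivative_eq_vandermonde _ hgK θ hθ hs
    rw [derivative_map, hdeg, resultant_map_map, ← hD] at hε
    have hroot : ∀ i, aeval (θ i) g = 0 := by
      intro i
      have : θ i ∈ (g.map (algebraMap S K)).roots := by rw [hθ]; simp
      have := (mem_roots'.1 this).2
      rwa [IsRoot, eval_map_algebraMap] at this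
    have hV : (Matrix.vandermonde θ).det ^ p =
        (Matrix.vandermonde θ).det * algebraMap S K M.det := by
      have h1 : (Matrix.vandermonde θ).map (frobenius K p) =
          Matrix.vandermonde θ * (M.map (algebraMap S K)).transpose := by
        ext i k
        rw [Matrix.mul_apply]
        simp only [Matrix.map_apply, Matrix.vandermonde_apply, Matrix.transpose_apply,
          frobenius_def]
        rw [← pow_mul, mul_comm, pow_eq_sum_modByMonic g hg (θ i) (hroot i)]
        exact Finset.sum_congr rfl fun l _ => by rw [Algebra.smul_def, mul_comm]
      have h2 := congrArg Matrix.det h1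
      rw [Matrix.det_mul, Matrix.det_transpose] at h2
      have h3 := RingHom.map_det (frobenius K p) (Matrix.vandermonde θ)
      have h4 := RingHom.map_det (algebraMap S K) M
      rw [RingHom.mapMatrix_apply] at h3 h4
      rw [h4, ← h2, ← h3, frobenius_def]
    refine ⟨(-1) ^ (ε * p) * (-1) ^ ε * (M.det * D), hinj ?_⟩
    have hsq : ((-1 : K) ^ ε) * (-1) ^ ε = 1 := by
      rw [← mul_pow, neg_one_mul, neg_neg, one_pow]
    set V := (Matrix.vandermonde θ).det
    simp only [map_mul, map_pow, map_neg, map_one, hε]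
    calc ((-1) ^ ε * V ^ 2) ^ p = (-1) ^ (ε * p) * (V ^ p) ^ 2 := by ring
      _ = (-1) ^ (ε * p) * (V * algebraMap S K M.det) ^ 2 := by rw [hV]
      _ = (-1) ^ (ε * p) * (((-1 : K) ^ ε) * (-1) ^ ε) * (V * algebraMap S K M.det) ^ 2 := by
        rw [hsq, mul_one]
      _ = _ := by ring
  obtain ⟨y, hy⟩ := hdvd
  rw [hy, mul_comm, mul_smul]
  exact Submodule.smul_mem _ _ (all j)

/-! ### The Frobenius map `A^{p^s} → A` -/

section Frob
variable (p : ℕ) [Fact p.Prime] {s : ℕ} {A : Type*} [CommRing A] [Algebra (ZMod p) A] [CharP A p]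

/-- The `ZMod p`-linear map `(a_α) ↦ ∑_α a_α ^ p · z ^ α`, where `α` runs over the exponent vectors
with all entries `< p`. It is the structure map `A^{p^s} → F_* A` of the Frobenius pushforward
attached to the elements `z`. -/
noncomputable def frobMap (z : Fin s → A) : ((Fin s → Fin p) → A) →ₗ[ZMod p] A where
  toFun a := ∑ α, a α ^ p * ∏ i, z i ^ (α i : ℕ)
  map_add' a b := by
    rw [← Finset.sum_add_distrib]
    exact Finset.sum_congr rfl fun α _ => by rw [Pi.add_apply, add_pow_char, add_mul]
  map_smul' t a := by
    rw [RingHom.id_apply, Finset.smul_sum]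
    exact Finset.sum_congr rfl fun α _ => by
      rw [Pi.smul_apply, _root_.smul_pow, ZMod.pow_card, smul_mul_assoc]

lemma frobMap_apply (z : Fin s → A) (a : (Fin s → Fin p) → A) :
    frobMap p z a = ∑ α, a α ^ p * ∏ i, z i ^ (α i : ℕ) := rfl

lemma frobMap_smul (z : Fin s → A) (b : A) (a : (Fin s → Fin p) → A) :
    frobMap p z (b • a) = b ^ p * frobMap p z a := by
  simp [frobMap_apply, Finset.mul_sum, mul_pow, mul_assoc]

/-- Monomials with arbitrary exponents are absorbed by division of the exponents by `p`. -/
lemma pow_mul_prod_mem_range_frobMap (z : Fin s → A) (b : A) (β : Fin s → ℕ) :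
    b ^ p * ∏ i, z i ^ β i ∈ LinearMap.range (frobMap p z) := by
  classical
  have hp : 0 < p := (Fact.out : p.Prime).pos
  refine ⟨Pi.single (fun i => ⟨β i % p, Nat.mod_lt _ hp⟩) (b * ∏ i, z i ^ (β i / p)), ?_⟩
  rw [frobMap_apply, Finset.sum_eq_single (fun i => ⟨β i % p, Nat.mod_lt _ hp⟩)]
  · rw [Pi.single_eq_same, mul_pow, mul_assoc, ← Finset.prod_pow, ← Finset.prod_mul_distrib]
    congr 1
    refine Finset.prod_congr rfl fun i _ => ?_
    rw [← pow_mul, ← pow_add, mul_comm, Nat.div_add_mod]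
  · intro α _ hα
    rw [Pi.single_eq_of_ne hα, zero_pow hp.ne', zero_mul]
  · simp

variable [Algebra (MvPolynomial (Fin s) (ZMod p)) A]
  [IsScalarTower (ZMod p) (MvPolynomial (Fin s) (ZMod p)) A]

local notation "S" => MvPolynomial (Fin s) (ZMod p)

/-- The images in `A` of the variables of the polynomial ring. -/
noncomputable def varImage (i : Fin s) : A := algebraMap S A (MvPolynomial.X i)

lemma smul_pow_mem_range_frobMap (f : S) (b : A) :
    f • b ^ p ∈ LinearMap.range (frobMap p (varImage p (s := s) (A := A))) := by
  induction f using MvPolynomial.induction_on' with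
  | monomial m t =>
    have : (MvPolynomial.monomial m t : S) • b ^ p =
        t • (b ^ p * ∏ i, varImage p (s := s) (A := A) i ^ m i) := by
      rw [MvPolynomial.monomial_eq, ← MvPolynomial.smul_eq_C_mul, smul_assoc,
        Finsupp.prod_fintype _ _ (by simp)]
      congr 1
      rw [Algebra.smul_def, map_prod, mul_comm]
      simp [varImage]
    rw [this]
    exact Submodule.smul_mem _ _ (pow_mul_prod_mem_range_frobMap p _ _ _)
  | add f g hf hg => rw [add_smul]; exact Submodule.add_mem _ hf hg

/-- The `p`-th power of the product of the discriminants multiplies `A` into `∑ A^p z^α`. -/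
lemma prod_disc_pow_mul_mem {u : ℕ} (v : Fin u → A)
    (hv : Algebra.adjoin (ZMod p) (Set.range v) = ⊤) (g : Fin u → S[X]) (hg : ∀ i, (g i).Monic)
    (hroot : ∀ i, aeval (v i) (g i) = 0) (a : A) :
    algebraMap S A (∏ i, resultant (g i) (derivative (g i)) (g i).natDegree
      ((g i).natDegree - 1)) ^ p * a ∈
      LinearMap.range (frobMap p (varImage p (s := s) (A := A))) := by
  set D : Fin u → S := fun i => resultant (g i) (derivative (g i)) (g i).natDegree
      ((g i).natDegree - 1) with hD
  -- `F = S[A^p]` is a subring, so the estimates for the single generators can be multiplied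
  let F : Submodule S A := Submodule.span S (Set.range fun b : A => b ^ p)
  have hFE : ∀ x ∈ F, x ∈ LinearMap.range (frobMap p (varImage p (s := s) (A := A))) := by
    intro x hx
    induction hx using Submodule.span_induction with
    | mem x h =>
      obtain ⟨b, rfl⟩ := h
      simpa using smul_pow_mem_range_frobMap p (1 : S) b
    | zero => exact Submodule.zero_mem _
    | add x y _ _ hx hy => exact Submodule.add_mem _ hx hy
    | smul t x hx' _ =>
      clear * - hx'
      induction hx' using Submodule.span_induction generalizing t with
      | mem x h =>
        obtain ⟨b, rfl⟩ := h
        exact smul_pow_mem_range_frobMap p t b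
      | zero => rw [smul_zero]; exact Submodule.zero_mem _
      | add x y _ _ hx hy => rw [smul_add]; exact Submodule.add_mem _ (hx t) (hy t)
      | smul t' x _ hx => rw [smul_smul]; exact hx _
  have hFmul : ∀ x ∈ F, ∀ y ∈ F, x * y ∈ F := by
    intro x hx y hy
    have h1 : x * y ∈ F * F := Submodule.mul_mem_mul hx hy
    have h2 : F * F ≤ F := by
      simp only [F]
      rw [Submodule.span_mul_span, Submodule.span_le]
      rintro _ ⟨_, ⟨a, rfl⟩, _, ⟨b, rfl⟩, rfl⟩
      exact Submodule.subset_span ⟨a * b, mul_pow _ _ _⟩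
    exact h2 h1
  have hF1 : (1 : A) ∈ F := Submodule.subset_span ⟨1, one_pow _⟩
  have hFprod : ∀ (f : Fin u → A), (∀ i, f i ∈ F) → ∏ i, f i ∈ F := fun f hf =>
    Finset.prod_induction f (· ∈ F) (fun x y hx hy => hFmul x hx y hy) hF1 (fun i _ => hf i)
  have ha : a ∈ Algebra.adjoin (ZMod p) (Set.range v) := by rw [hv]; trivial
  rw [Algebra.adjoin_range_eq_range_aeval] at ha
  obtain ⟨P, rfl⟩ := ha
  change _ * MvPolynomial.aeval v P ∈ _
  induction P using MvPolynomial.induction_on' with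
  | monomial m t =>
    rw [MvPolynomial.aeval_monomial, Finsupp.prod_fintype _ _ (by simp), mul_left_comm,
      ← Algebra.smul_def]
    refine Submodule.smul_mem _ _ (hFE _ ?_)
    rw [map_prod, ← Finset.prod_pow, ← Finset.prod_mul_distrib]
    refine hFprod _ fun i => ?_
    rw [← map_pow, ← Algebra.smul_def]
    refine Submodule.span_mono ?_ (disc_pow_smul_mem (g i) (hg i) (v i) (hroot i) (m i))
    rintro _ ⟨n, rfl⟩
    exact ⟨_, rfl⟩
  | add P Q hP hQ => rw [map_add, mul_add]; exact Submodule.add_mem _ hP hQ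

/-- The monomials with exponents `< p` are linearly independent over `p`-th powers of polynomials. -/
lemma frobMap_X_injective :
    Function.Injective (frobMap p (MvPolynomial.X : Fin s → S)) := by
  rw [← LinearMap.ker_eq_bot, LinearMap.ker_eq_bot']
  intro a ha
  have hp : 0 < p := (Fact.out : p.Prime).pos
  funext α
  ext γ
  let α' : Fin s →₀ ℕ := Finsupp.equivFunOnFinite.symm (fun i => (α i : ℕ))
  have h := congrArg (MvPolynomial.coeff (p • γ + α')) ha
  have hmon : ∀ β : Fin s → Fin p, ∏ i, (MvPolynomial.X i : S) ^ (β i : ℕ) =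
      MvPolynomial.monomial (Finsupp.equivFunOnFinite.symm (fun i => (β i : ℕ))) 1 := by
    intro β
    rw [MvPolynomial.monomial_eq, Finsupp.prod_fintype _ _ (by simp)]
    simp
  rw [frobMap_apply, MvPolynomial.coeff_sum, Finset.sum_eq_single α] at h
  · rw [hmon, MvPolynomial.coeff_mul_monomial, mul_one, ← MvPolynomial.expand_zmod,
      MvPolynomial.coeff_expand_smul _ hp.ne'] at h
    simpa using h
  · intro β _ hβ
    rw [hmon, MvPolynomial.coeff_mul_monomial', mul_one, ← MvPolynomial.expand_zmod]
    split_ifs with hle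
    · obtain ⟨i, hi⟩ := Function.ne_iff.1 hβ
      refine MvPolynomial.coeff_expand_of_not_dvd _ (i := i) ?_
      intro hdvd
      apply hi
      have hle' := hle i
      simp only [α', Finsupp.coe_tsub, Pi.sub_apply, Finsupp.add_apply, Finsupp.smul_apply,
        Finsupp.equivFunOnFinite_symm_apply_apply, smul_eq_mul] at hdvd hle'
      have h1 : (β i : ℕ) ≡ p * γ i + α i [MOD p] := (Nat.modEq_iff_dvd' hle').2 hdvd
      have h2 : (β i : ℕ) % p = (α i : ℕ) % p := by
        have h3 : (β i : ℕ) % p = (p * γ i + α i) % p := h1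
        rw [h3, Nat.mul_add_mod]
      rw [Nat.mod_eq_of_lt (β i).2, Nat.mod_eq_of_lt (α i).2] at h2
      exact Fin.ext h2
    · rfl
  · simp

end Frob

/-! ### Injectivity of the Frobenius map -/

section FrobInj
open scoped nonZeroDivisors
variable (p : ℕ) [Fact p.Prime] {s : ℕ} {A : Type*} [CommRing A] [IsDomain A] [Algebra (ZMod p) A]
  [CharP A p] [Algebra (MvPolynomial (Fin s) (ZMod p)) A]

local notation "S" => MvPolynomial (Fin s) (ZMod p)

/-- The injectivity argument, carried out in fraction fields `L` of `S` and `K` of `A`: the `p`-th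
powers of an `L`-basis `e` of `K` span `K`, hence form a basis, and expanding a relation
`∑ a_α ^ p z ^ α = 0` in this basis reduces it to the same relation over the polynomial ring. -/
lemma frobMap_varImage_injective_aux (L K : Type*) [Field L] [Field K]
    [Algebra S L] [IsFractionRing S L]
    [Algebra A K] [IsFractionRing A K] [Algebra S K]
    [IsScalarTower S A K] [Algebra L K]
    [IsScalarTower S L K] [FiniteDimensional L K]
    [FaithfulSMul S A]
    [IsLocalization (Algebra.algebraMapSubmonoid A S⁰) K]
    (c : S) (hc : c ≠ 0)
    (hcA : ∀ a : A, algebraMap S A c ^ p * a ∈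
      LinearMap.range (frobMap p (varImage p (s := s) (A := A)))) :
    Function.Injective (frobMap p (varImage p (s := s) (A := A))) := by
  have hp : p.Prime := Fact.out
  have : CharP K p := charP_of_injective_algebraMap (IsFractionRing.injective A K) p
  have hSK : Function.Injective (algebraMap S K) := by
    rw [IsScalarTower.algebraMap_eq S A K]
    exact (IsFractionRing.injective A K).comp (FaithfulSMul.algebraMap_injective S A)
  let e := Module.finBasis L K
  have hpowsum : ∀ (l : Fin (Module.finrank L K) → L),
      (∑ i, l i • e i) ^ p = ∑ i, l i ^ p • e i ^ p := by
    intro l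
    rw [sum_pow_char]
    exact Finset.sum_congr rfl fun i _ => _root_.smul_pow _ _ _
  have hA : ∀ a : A, algebraMap A K a ^ p ∈ Submodule.span L (Set.range fun i => e i ^ p) := by
    intro a
    rw [← e.sum_repr (algebraMap A K a), hpowsum]
    exact Submodule.sum_mem _ fun i _ => Submodule.smul_mem _ _ (Submodule.subset_span ⟨i, rfl⟩)
  have hspan : ⊤ ≤ Submodule.span L (Set.range fun i => e i ^ p) := by
    intro k _
    obtain ⟨⟨a, ⟨_, t, ht, rfl⟩⟩, hk⟩ :=
      IsLocalization.surj (Algebra.algebraMapSubmonoid A S⁰) k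
    obtain ⟨b, hb⟩ := hcA a
    have ht0 : t ≠ 0 := nonZeroDivisors.ne_zero ht
    have h1 : (algebraMap S L (c ^ p * t)) • k ∈
        Submodule.span L (Set.range fun i => e i ^ p) := by
      have h2 : (algebraMap S L (c ^ p * t)) • k = algebraMap A K (algebraMap S A c ^ p * a) := by
        rw [Algebra.smul_def, ← IsScalarTower.algebraMap_apply, map_mul, map_mul, ← hk, map_pow,
          map_pow, ← IsScalarTower.algebraMap_apply, mul_assoc, mul_comm k]
        congr 2
        exact IsScalarTower.algebraMap_apply S A K t
      rw [h2, ← hb, frobMap_apply, map_sum]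
      refine Submodule.sum_mem _ fun α _ => ?_
      have h3 : algebraMap A K (b α ^ p * ∏ i, varImage p (s := s) (A := A) i ^ (α i : ℕ)) =
          algebraMap S L (∏ i, (MvPolynomial.X i : S) ^ (α i : ℕ)) • algebraMap A K (b α) ^ p := by
        rw [Algebra.smul_def, ← IsScalarTower.algebraMap_apply, IsScalarTower.algebraMap_apply S A K,
          map_mul, mul_comm, map_pow]
        simp [varImage]
      rw [h3]
      exact Submodule.smul_mem _ _ (hA _)
    have h4 : algebraMap S L (c ^ p * t) ≠ 0 := by
      rw [Ne, IsFractionRing.to_map_eq_zero_iff]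
      exact mul_ne_zero (pow_ne_zero _ hc) ht0
    exact (Submodule.smul_mem_iff _ h4).1 h1
  have hli : LinearIndependent L (fun i => e i ^ p) :=
    linearIndependent_of_top_le_span_of_card_eq_finrank hspan (by simp)
  rw [← LinearMap.ker_eq_bot, LinearMap.ker_eq_bot']
  intro a ha
  obtain ⟨⟨t, ht⟩, hx⟩ := IsLocalization.exist_integer_multiples_of_finite S⁰
    (fun q : (Fin s → Fin p) × Fin (Module.finrank L K) => e.repr (algebraMap A K (a q.1)) q.2)
  have ht0 : t ≠ 0 := nonZeroDivisors.ne_zero ht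
  choose x hx using hx
  simp only at hx
  have hta : ∀ α, algebraMap A K (algebraMap S A t * a α) =
      ∑ i, algebraMap S L (x (α, i)) • e i := by
    intro α
    simp_rw [hx, smul_assoc, ← Finset.smul_sum]
    rw [e.sum_repr, Algebra.smul_def, map_mul, ← IsScalarTower.algebraMap_apply]
  have hz : ∀ i, ∑ α, (algebraMap S L (x (α, i)) ^ p *
      algebraMap S L (∏ j, (MvPolynomial.X j : S) ^ (α j : ℕ))) = 0 := by
    refine Fintype.linearIndependent_iff.1 hli _ ?_
    have h5 : algebraMap A K (algebraMap S A t ^ p *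
      frobMap p (varImage p (s := s) (A := A)) a) = 0 := by rw [ha]; simp
    rw [← frobMap_smul, frobMap_apply, map_sum] at h5
    rw [← h5]
    simp_rw [Finset.sum_smul]
    rw [Finset.sum_comm]
    refine Finset.sum_congr rfl fun α _ => ?_
    have h6 : algebraMap A K (∏ i, varImage p (s := s) (A := A) i ^ (α i : ℕ)) =
        algebraMap L K (algebraMap S L (∏ j, (MvPolynomial.X j : S) ^ (α j : ℕ))) := by
      rw [← IsScalarTower.algebraMap_apply S L K, IsScalarTower.algebraMap_apply S A K]
      simp [varImage]
    rw [map_mul, map_pow, Pi.smul_apply, smul_eq_mul, hta, hpowsum, h6, mul_comm,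
      ← Algebra.smul_def, Finset.smul_sum]
    refine Finset.sum_congr rfl fun i _ => ?_
    rw [smul_smul, mul_comm]
  have hx0 : ∀ i, (fun α => x (α, i)) = 0 := by
    intro i
    refine frobMap_X_injective p ?_
    rw [map_zero, frobMap_apply]
    apply IsFractionRing.injective S L
    rw [map_zero, ← hz i, map_sum]
    simp only [map_mul, map_pow]
  funext α
  have h7 : algebraMap A K (algebraMap S A t * a α) = 0 := by
    rw [hta]
    refine Finset.sum_eq_zero fun i _ => ?_
    have := congrFun (hx0 i) α
    simp only [Pi.zero_apply] at this
    rw [this, map_zero, zero_smul]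
  rw [IsFractionRing.to_map_eq_zero_iff, mul_eq_zero] at h7
  refine h7.resolve_left fun h => ht0 ?_
  exact (FaithfulSMul.algebraMap_injective S A) (by rw [h, map_zero])

/-- The Frobenius map attached to the variables of a Noether normalisation `S ⊆ A` is injective as
soon as its image contains a nonzero ideal: it is a surjection between spaces of equal dimension
after passing to fraction fields. -/
lemma frobMap_varImage_injective [Module.Finite S A]
    [FaithfulSMul S A]
    (c : S) (hc : c ≠ 0)
    (hcA : ∀ a : A, algebraMap S A c ^ p * a ∈
      LinearMap.range (frobMap p (varImage p (s := s) (A := A)))) :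
    Function.Injective (frobMap p (varImage p (s := s) (A := A))) := by
  let : Algebra (FractionRing S) (FractionRing A) := FractionRing.liftAlgebra _ _
  have : IsScalarTower S (FractionRing S) (FractionRing A) :=
    FractionRing.isScalarTower_liftAlgebra _ _
  have : Algebra.IsAlgebraic S A := Algebra.IsIntegral.isAlgebraic
  have : FiniteDimensional (FractionRing S) (FractionRing A) := .of_isLocalization S A S⁰
  exact frobMap_varImage_injective_aux p (FractionRing S) (FractionRing A) c hc hcA

end FrobInj

/-! ### Comparison of colengths -/

section Len
variable {k : Type*} [Field k]

/-- A map `V/U → W/U'` has cokernel a quotient of `W/T` as soon as `T ≤ U' + im f`. -/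
lemma finrank_quotient_le_add {V W : Type*} [AddCommGroup V] [Module k V] [AddCommGroup W]
    [Module k W] (f : V →ₗ[k] W) (U : Submodule k V) (U' : Submodule k W) (h : U ≤ U'.comap f)
    [FiniteDimensional k (V ⧸ U)] [FiniteDimensional k (W ⧸ U')] (T : Submodule k W)
    (hT : T ≤ U' ⊔ LinearMap.range f) [FiniteDimensional k (W ⧸ T)] :
    Module.finrank k (W ⧸ U') ≤ Module.finrank k (V ⧸ U) + Module.finrank k (W ⧸ T) := by
  let g : V ⧸ U →ₗ[k] W ⧸ U' := U.mapQ U' f h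
  rw [← Submodule.finrank_quotient_add_finrank (LinearMap.range g), add_comm]
  refine add_le_add (LinearMap.finrank_range_le g) ?_
  have hT' : T ≤ LinearMap.ker ((LinearMap.range g).mkQ ∘ₗ U'.mkQ) := by
    refine hT.trans (sup_le ?_ ?_)
    · intro x hx
      simp [LinearMap.mem_ker, (Submodule.Quotient.mk_eq_zero U').2 hx]
    · rintro _ ⟨v, rfl⟩
      rw [LinearMap.mem_ker, LinearMap.comp_apply, Submodule.mkQ_apply, Submodule.mkQ_apply,
        Submodule.Quotient.mk_eq_zero]
      exact ⟨U.mkQ v, by simp [g]⟩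
  refine LinearMap.finrank_le_finrank_of_surjective (f := T.liftQ _ hT') ?_
  intro x
  obtain ⟨y, rfl⟩ := Submodule.mkQ_surjective _ x
  obtain ⟨w, rfl⟩ := Submodule.mkQ_surjective _ y
  exact ⟨T.mkQ w, by simp⟩

variable {A : Type*} [CommRing A] [Algebra k A]

lemma finrank_quotient_restrictScalars (J : Ideal A) :
    Module.finrank k (A ⧸ J.restrictScalars k) = Module.finrank k (A ⧸ J) :=
  (Submodule.Quotient.restrictScalarsEquiv k J).finrank_eq

lemma finite_quotient_restrictScalars (J : Ideal A) [Module.Finite k (A ⧸ J)] :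
    Module.Finite k (A ⧸ J.restrictScalars k) :=
  Module.Finite.equiv (Submodule.Quotient.restrictScalarsEquiv k J).symm

lemma finite_quotient_of_le {J J' : Ideal A} (h : J ≤ J') [Module.Finite k (A ⧸ J)] :
    Module.Finite k (A ⧸ J') :=
  Module.Finite.of_surjective (Ideal.Quotient.factorₐ k h).toLinearMap
    (Ideal.Quotient.factor_surjective h)

/-- Multiplication by `c` filters `A/(J + cⁿ)` with `n` subquotients, each a quotient of
`A/(J + c)`. -/
lemma finrank_quotient_sup_pow_le (J : Ideal A) [Module.Finite k (A ⧸ J)] (c : A) (n : ℕ) :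
    Module.finrank k (A ⧸ (J ⊔ Ideal.span {c ^ n})) ≤
      n * Module.finrank k (A ⧸ (J ⊔ Ideal.span {c})) := by
  have hfin : ∀ J', J ≤ J' → Module.Finite k (A ⧸ Submodule.restrictScalars k J') := fun J' h =>
    haveI := finite_quotient_of_le (k := k) h
    finite_quotient_restrictScalars J'
  induction n with
  | zero =>
    have : Subsingleton (A ⧸ (J ⊔ Ideal.span {c ^ 0})) := by
      rw [Ideal.Quotient.subsingleton_iff]
      simp
    rw [Module.finrank_zero_of_subsingleton]
    exact Nat.zero_le _
  | succ n ih =>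
    have := hfin (J ⊔ Ideal.span {c}) le_sup_left
    have := hfin (J ⊔ Ideal.span {c ^ n}) le_sup_left
    have := hfin (J ⊔ Ideal.span {c ^ (n + 1)}) le_sup_left
    have h := finrank_quotient_le_add (LinearMap.mulLeft k (c ^ n))
      ((J ⊔ Ideal.span {c}).restrictScalars k) ((J ⊔ Ideal.span {c ^ (n + 1)}).restrictScalars k)
      (by
        intro x hx
        obtain ⟨y, hy, z, hz, rfl⟩ := Submodule.mem_sup.1 hx
        obtain ⟨w, rfl⟩ := Ideal.mem_span_singleton'.1 hz
        simp only [Submodule.mem_comap, LinearMap.mulLeft_apply, Submodule.restrictScalars_mem]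
        refine Submodule.mem_sup.2 ⟨c ^ n * y, J.mul_mem_left _ hy, c ^ n * (w * c),
          Ideal.mem_span_singleton'.2 ⟨w, by ring⟩, by ring⟩)
      ((J ⊔ Ideal.span {c ^ n}).restrictScalars k)
      (by
        intro x hx
        obtain ⟨y, hy, z, hz, rfl⟩ := Submodule.mem_sup.1 hx
        obtain ⟨w, rfl⟩ := Ideal.mem_span_singleton'.1 hz
        refine Submodule.add_mem_sup ?_ ⟨w, by simp [mul_comm]⟩
        exact Ideal.mem_sup_left hy)
    simp only [finrank_quotient_restrictScalars] at h
    rw [add_mul, one_mul]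
    omega

end Len

section FrobLen
variable (p : ℕ) [Fact p.Prime] {s : ℕ} {A : Type*} [CommRing A] [Algebra (ZMod p) A]

/-- Vectors all of whose entries lie in the ideal `J`. -/
def Ideal.piVec (J : Ideal A) : Submodule (ZMod p) ((Fin s → Fin p) → A) :=
  Submodule.pi Set.univ fun _ => J.restrictScalars (ZMod p)

lemma Ideal.mem_piVec (J : Ideal A) (v : (Fin s → Fin p) → A) :
    v ∈ J.piVec p ↔ ∀ α, v α ∈ J := by
  simp [Ideal.piVec, Submodule.mem_pi]

lemma finite_quotient_piVec (J : Ideal A) [Module.Finite (ZMod p) (A ⧸ J)] :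
    Module.Finite (ZMod p) (((Fin s → Fin p) → A) ⧸ (J.piVec p : Submodule _ _)) := by
  have := finite_quotient_restrictScalars (k := ZMod p) J
  exact Module.Finite.equiv
    (Submodule.quotientPi (fun _ : Fin s → Fin p => J.restrictScalars (ZMod p))).symm

lemma finrank_quotient_piVec (J : Ideal A) [Module.Finite (ZMod p) (A ⧸ J)] :
    Module.finrank (ZMod p) (((Fin s → Fin p) → A) ⧸ (J.piVec p : Submodule _ _)) =
      p ^ s * Module.finrank (ZMod p) (A ⧸ J) := by
  have := finite_quotient_restrictScalars (k := ZMod p) J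
  rw [Ideal.piVec, LinearEquiv.finrank_eq (Submodule.quotientPi
    (fun _ : Fin s → Fin p => J.restrictScalars (ZMod p))), Module.finrank_pi_fintype]
  simp [finrank_quotient_restrictScalars]

variable [CharP A p]

/-- `ℓ(A/J^{[p]}) ≤ p^s ℓ(A/J) + p ℓ(A/(J^{[p]} + c))`. -/
lemma finrank_quotient_frobeniusPower_le (z : Fin s → A) (c : A)
    (hc : ∀ a, c ^ p * a ∈ LinearMap.range (frobMap p z)) (J : Ideal A)
    [Module.Finite (ZMod p) (A ⧸ J)] [Module.Finite (ZMod p) (A ⧸ J.frobeniusPower p)] :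
    Module.finrank (ZMod p) (A ⧸ J.frobeniusPower p) ≤
      p ^ s * Module.finrank (ZMod p) (A ⧸ J) +
        p * Module.finrank (ZMod p) (A ⧸ (J.frobeniusPower p ⊔ Ideal.span {c})) := by
  have := finite_quotient_of_le (k := ZMod p)
    (le_sup_left : J.frobeniusPower p ≤ J.frobeniusPower p ⊔ Ideal.span {c ^ p})
  have := finite_quotient_restrictScalars (k := ZMod p) (J.frobeniusPower p)
  have := finite_quotient_restrictScalars (k := ZMod p) (J.frobeniusPower p ⊔ Ideal.span {c ^ p})
  have := finite_quotient_piVec (s := s) p J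
  have h := finrank_quotient_le_add (frobMap p z) (J.piVec p)
    ((J.frobeniusPower p).restrictScalars (ZMod p))
    (by
      intro v hv
      rw [Ideal.mem_piVec] at hv
      simp only [Submodule.mem_comap, Submodule.restrictScalars_mem, frobMap_apply]
      exact Ideal.sum_mem _ fun α _ => Ideal.mul_mem_right _ _
        (Ideal.subset_span ⟨v α, hv α, rfl⟩))
    ((J.frobeniusPower p ⊔ Ideal.span {c ^ p}).restrictScalars (ZMod p))
    (by
      intro x hx
      obtain ⟨y, hy, w, hw, rfl⟩ := Submodule.mem_sup.1 hx
      obtain ⟨w, rfl⟩ := Ideal.mem_span_singleton'.1 hw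
      refine Submodule.add_mem_sup hy ?_
      rw [mul_comm]
      exact hc w)
  rw [finrank_quotient_piVec] at h
  simp only [finrank_quotient_restrictScalars] at h
  exact h.trans (Nat.add_le_add_left (finrank_quotient_sup_pow_le _ c p) _)

/-- `p^s ℓ(A/J) ≤ ℓ(A/J^{[p]}) + p^s ℓ(A/(J + c))`. -/
lemma le_finrank_quotient_frobeniusPower (z : Fin s → A) (c : A)
    (hc : ∀ a, c ^ p * a ∈ LinearMap.range (frobMap p z))
    (hinj : Function.Injective (frobMap p z)) (J : Ideal A)
    [Module.Finite (ZMod p) (A ⧸ J)] [Module.Finite (ZMod p) (A ⧸ J.frobeniusPower p)] :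
    p ^ s * Module.finrank (ZMod p) (A ⧸ J) ≤
      Module.finrank (ZMod p) (A ⧸ J.frobeniusPower p) +
        p ^ s * Module.finrank (ZMod p) (A ⧸ (J ⊔ Ideal.span {c})) := by
  have := finite_quotient_of_le (k := ZMod p) (le_sup_left : J ≤ J ⊔ Ideal.span {c})
  have := finite_quotient_restrictScalars (k := ZMod p) (J.frobeniusPower p)
  have := finite_quotient_piVec (s := s) p J
  have := finite_quotient_piVec (s := s) p (J ⊔ Ideal.span {c})
  -- `ψ a = φ⁻¹ (c ^ p a)`
  let ψ : A →ₗ[ZMod p] ((Fin s → Fin p) → A) :=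
    (LinearEquiv.ofInjective (frobMap p z) hinj).symm.toLinearMap ∘ₗ
      (LinearMap.mulLeft (ZMod p) (c ^ p)).codRestrict _ hc
  have hψ : ∀ a, frobMap p z (ψ a) = c ^ p * a := by
    intro a
    have := (LinearEquiv.ofInjective (frobMap p z) hinj).apply_symm_apply
      ((LinearMap.mulLeft (ZMod p) (c ^ p)).codRestrict _ hc a)
    exact congrArg Subtype.val this
  have hψ1 : ∀ v, ψ (frobMap p z v) = c • v := by
    intro v
    apply hinj
    rw [hψ, frobMap_smul]
  have hψ2 : ∀ r j, ψ (r * j ^ p) = j • ψ r := by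
    intro r j
    apply hinj
    rw [hψ, frobMap_smul, hψ]
    ring
  have h := finrank_quotient_le_add ψ ((J.frobeniusPower p).restrictScalars (ZMod p)) (J.piVec p)
    (by
      intro x hx
      rw [Submodule.restrictScalars_mem] at hx
      rw [Submodule.mem_comap]
      refine Submodule.span_induction (p := fun x _ => ∀ r, ψ (r * x) ∈ J.piVec p)
        ?_ ?_ ?_ ?_ hx 1 |> fun h => by simpa using h
      · rintro _ ⟨j, hj, rfl⟩ r
        rw [hψ2, Ideal.mem_piVec]
        exact fun α => J.mul_mem_right _ hj
      · simp
      · intro x y _ _ hx hy r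
        rw [mul_add, map_add]
        exact Submodule.add_mem _ (hx r) (hy r)
      · intro a x _ hx r
        rw [smul_eq_mul, ← mul_assoc]
        exact hx _)
    ((J ⊔ Ideal.span {c}).piVec p)
    (by
      intro v hv
      rw [Ideal.mem_piVec] at hv
      have : ∀ α, ∃ y ∈ J, ∃ w, y + c * w = v α := by
        intro α
        obtain ⟨y, hy, w, hw, h⟩ := Submodule.mem_sup.1 (hv α)
        obtain ⟨w, rfl⟩ := Ideal.mem_span_singleton.1 hw
        exact ⟨y, hy, w, h⟩
      choose y hy w hw using this
      have : v = y + ψ (frobMap p z w) := by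
        rw [hψ1]
        funext α
        exact (hw α).symm
      rw [this]
      exact Submodule.add_mem_sup ((Ideal.mem_piVec p J y).2 hy) ⟨_, rfl⟩)
  rw [finrank_quotient_piVec, finrank_quotient_piVec] at h
  simpa only [finrank_quotient_restrictScalars] using h

end FrobLen

/-! ### Colengths of Frobenius powers in the presence of integral equations -/

section Bound
variable {k : Type*} [Field k] {Q : Type*} [CommRing Q] [Algebra k Q]

/-- Reduction of powers modulo a monic relation, with control of the degrees of the coefficients:
the degree grows at most linearly in the exponent. -/
lemma exists_pow_eq_sum_totalDegree_le {s : ℕ} (z : Fin s → Q) (x : Q)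
    (G : (MvPolynomial (Fin s) k)[X]) (hG : G.Monic) {E h : ℕ}
    (hE : ∀ j, (G.coeff j).totalDegree ≤ E) (hh : G.natDegree ≤ h)
    (hx : eval₂ (MvPolynomial.aeval z).toRingHom x G = 0) (m : ℕ) :
    ∃ t : Fin h → MvPolynomial (Fin s) k, (∀ j, (t j).totalDegree ≤ m * E) ∧
      x ^ m = ∑ j, MvPolynomial.aeval z (t j) * x ^ (j : ℕ) := by
  rcases Nat.eq_zero_or_pos G.natDegree with hr | hr
  · rw [hG.natDegree_eq_zero.1 hr, eval₂_one] at hx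
    refine ⟨0, by simp, ?_⟩
    rw [← one_mul (x ^ m), hx]
    simp
  suffices H : ∃ T : (MvPolynomial (Fin s) k)[X], T.natDegree < G.natDegree ∧
      (∀ j, (T.coeff j).totalDegree ≤ m * E) ∧
      eval₂ (MvPolynomial.aeval z).toRingHom x T = x ^ m by
    obtain ⟨T, hT, hTE, hTx⟩ := H
    refine ⟨fun j => T.coeff j, fun j => hTE j, ?_⟩
    rw [← hTx, eval₂_eq_sum_range' _ (hT.trans_le hh), ← Fin.sum_univ_eq_sum_range
      (fun i => (MvPolynomial.aeval z).toRingHom (T.coeff i) * x ^ i)]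
    rfl
  induction m with
  | zero =>
    refine ⟨1, by simpa using hr, fun j => ?_, by simp⟩
    rw [coeff_one]
    split_ifs <;> simp
  | succ m ih =>
    obtain ⟨T, hT, hTE, hTx⟩ := ih
    refine ⟨X * T - C (T.coeff (G.natDegree - 1)) * G, ?_, ?_, ?_⟩
    · have : ∀ n, G.natDegree - 1 < n →
          (X * T - C (T.coeff (G.natDegree - 1)) * G).coeff n = 0 := by
        intro n hn
        obtain ⟨n, rfl⟩ : ∃ l, n = l + 1 := ⟨n - 1, by omega⟩
        rw [coeff_sub, coeff_X_mul, coeff_C_mul]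
        rcases (show n = G.natDegree - 1 ∨ G.natDegree - 1 < n by omega) with h1 | h1
        · subst h1
          rw [Nat.sub_add_cancel hr, hG.coeff_natDegree]
          simp
        · rw [coeff_eq_zero_of_natDegree_lt (by omega : T.natDegree < n),
            coeff_eq_zero_of_natDegree_lt (by omega : G.natDegree < n + 1)]
          simp
      have := natDegree_le_iff_coeff_eq_zero.2 this
      omega
    · intro j
      rw [coeff_sub, coeff_C_mul]
      refine (MvPolynomial.totalDegree_sub _ _).trans (max_le ?_ ?_)
      · cases j with
        | zero => simp
        | succ j =>
          rw [coeff_X_mul]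
          exact (hTE j).trans (Nat.mul_le_mul_right _ (Nat.le_succ m))
      · refine (MvPolynomial.totalDegree_mul _ _).trans ?_
        rw [add_mul, one_mul]
        exact add_le_add (hTE _) (hE _)
    · rw [eval₂_sub, eval₂_mul, eval₂_mul, hx, mul_zero, sub_zero, eval₂_X, hTx, pow_succ']

lemma aeval_mem_span_monomials {s : ℕ} (z : Fin s → Q) (f : MvPolynomial (Fin s) k) {D : ℕ}
    (hf : f.totalDegree ≤ D) :
    MvPolynomial.aeval z f ∈
      Submodule.span k (Set.range fun α : Fin s → Fin (D + 1) => ∏ i, z i ^ (α i : ℕ)) := by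
  simp_rw [MvPolynomial.aeval_def, MvPolynomial.eval₂_eq', ← Algebra.smul_def]
  refine Submodule.sum_mem _ fun m hm => Submodule.smul_mem _ _ (Submodule.subset_span ?_)
  refine ⟨fun i => ⟨m i, ?_⟩, ?_⟩
  · have h1 : m i ≤ m.sum fun _ e => e := by
      rw [Finsupp.sum_fintype _ _ (by simp)]
      exact Finset.single_le_sum (f := fun i => m i) (fun _ _ => Nat.zero_le _) (Finset.mem_univ i)
    have h2 := MvPolynomial.le_totalDegree hm
    omega
  · rfl

/-- If the generators `v i` of a `k`-algebra satisfy the equations `P_i(v i) ^ q = 0` of degree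
`≤ h₁ q` over `k` and, over `s` elements `z`, monic equations `G i` of bounded shape, then the
algebra has dimension `O(q ^ s)`: monomials in `v` with exponents `< h₁ q` span, and each of them is
a combination of monomials in `v` with exponents `< h` whose coefficients have degree `O(q)` in
`z`. -/
lemma finrank_le_of_relations {u s : ℕ} (v : Fin u → Q)
    (hv : Algebra.adjoin k (Set.range v) = ⊤) (P : Fin u → k[X]) (hP : ∀ i, (P i).Monic)
    {h₁ q : ℕ} (hPd : ∀ i, (P i).natDegree ≤ h₁) (hPv : ∀ i, aeval (v i) (P i) ^ q = 0)
    (z : Fin s → Q) (G : Fin u → (MvPolynomial (Fin s) k)[X]) (hG : ∀ i, (G i).Monic) {E h : ℕ}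
    (hE : ∀ i j, ((G i).coeff j).totalDegree ≤ E) (hh : ∀ i, (G i).natDegree ≤ h)
    (hx : ∀ i, eval₂ (MvPolynomial.aeval z).toRingHom (v i) (G i) = 0) :
    Module.finrank k Q ≤ (u * (q * h₁ * E) + 1) ^ s * h ^ u := by
  classical
  set D := u * (q * h₁ * E) with hD
  set F : (Fin s → Fin (D + 1)) × (Fin u → Fin h) → Q :=
    fun a => (∏ i, z i ^ (a.1 i : ℕ)) * ∏ i, v i ^ (a.2 i : ℕ) with hF
  -- monomials in `v` with small exponents
  have h1 : ∀ m : Fin u → ℕ, (∀ i, m i ≤ q * h₁) →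
      ∏ i, v i ^ m i ∈ Submodule.span k (Set.range F) := by
    intro m hm
    have := fun i => exists_pow_eq_sum_totalDegree_le z (v i) (G i) (hG i) (hE i) (hh i) (hx i)
      (m i)
    choose t ht htv using this
    rw [Finset.prod_congr rfl fun i _ => htv i, Finset.prod_univ_sum]
    refine Submodule.sum_mem _ fun j _ => ?_
    rw [Finset.prod_mul_distrib, ← map_prod]
    have h2 : (∏ i, t i (j i)).totalDegree ≤ D := by
      refine (MvPolynomial.totalDegree_finsetProd _ _).trans ?_
      refine (Finset.sum_le_card_nsmul _ _ (q * h₁ * E) fun i _ => ?_).trans ?_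
      · exact (ht i (j i)).trans (Nat.mul_le_mul_right _ (hm i))
      · simp [hD]
    have h3 := aeval_mem_span_monomials z _ h2
    generalize MvPolynomial.aeval z (∏ i, t i (j i)) = y at h3
    induction h3 using Submodule.span_induction with
    | mem y hy =>
      obtain ⟨α, rfl⟩ := hy
      exact Submodule.subset_span ⟨(α, j), rfl⟩
    | zero => rw [zero_mul]; exact Submodule.zero_mem _
    | add y y' _ _ hy hy' => rw [add_mul]; exact Submodule.add_mem _ hy hy'
    | smul a y _ hy => rw [smul_mul_assoc]; exact Submodule.smul_mem _ _ hy
  have hspan : ⊤ ≤ Submodule.span k (Set.range F) := by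
    intro x _
    have hx' : x ∈ Algebra.adjoin k (Set.range v) := by rw [hv]; trivial
    rw [Algebra.adjoin_range_eq_range_aeval] at hx'
    obtain ⟨f, rfl⟩ := hx'
    change MvPolynomial.aeval v f ∈ _
    simp_rw [MvPolynomial.aeval_def, MvPolynomial.eval₂_eq', ← Algebra.smul_def]
    refine Submodule.sum_mem _ fun m _ => Submodule.smul_mem _ _ ?_
    have h4 : ∀ i, v i ^ m i = ∑ j : Fin (P i ^ q).natDegree,
        ((X ^ m i : k[X]) %ₘ (P i ^ q)).coeff j • v i ^ (j : ℕ) := fun i =>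
      pow_eq_sum_modByMonic (P i ^ q) ((hP i).pow q) (v i) (by rw [map_pow, hPv]) (m i)
    rw [Finset.prod_congr rfl fun i _ => h4 i, Finset.prod_univ_sum]
    refine Submodule.sum_mem _ fun j _ => ?_
    rw [Finset.prod_congr rfl fun i _ => Algebra.smul_def _ _, Finset.prod_mul_distrib, ← map_prod,
      ← Algebra.smul_def]
    refine Submodule.smul_mem _ _ (h1 _ fun i => (j i).2.le.trans ?_)
    rw [(hP i).natDegree_pow]
    exact Nat.mul_le_mul_left _ (hPd i)
  have h5 := finrank_range_le_card (R := k) F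
  rw [Set.finrank, top_le_iff.1 hspan, finrank_top] at h5
  simpa using h5

end Bound

section FrobPow
variable {A : Type*} [CommRing A]

lemma Ideal.pow_mem_frobeniusPower {J : Ideal A} {x : A} (hx : x ∈ J) (q : ℕ) :
    x ^ q ∈ J.frobeniusPower q := Ideal.subset_span ⟨x, hx, rfl⟩

lemma Ideal.frobeniusPower_frobeniusPower (p : ℕ) [Fact p.Prime] [CharP A p] (J : Ideal A)
    (n : ℕ) : (J.frobeniusPower (p ^ n)).frobeniusPower p = J.frobeniusPower (p ^ (n + 1)) := by
  apply le_antisymm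
  · rw [Ideal.frobeniusPower, Ideal.span_le]
    rintro _ ⟨x, hx, rfl⟩
    simp only [SetLike.mem_coe]
    refine Submodule.span_induction (p := fun x _ => x ^ p ∈ J.frobeniusPower (p ^ (n + 1)))
      ?_ ?_ ?_ ?_ hx
    · rintro _ ⟨y, hy, rfl⟩
      simp only
      rw [← pow_mul, ← pow_succ]
      exact Ideal.pow_mem_frobeniusPower hy _
    · rw [zero_pow (Fact.out : p.Prime).ne_zero]
      exact Ideal.zero_mem _
    · intro x y _ _ hx hy
      rw [add_pow_char]
      exact Ideal.add_mem _ hx hy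
    · intro a x _ hx
      rw [smul_eq_mul, mul_pow]
      exact Ideal.mul_mem_left _ _ hx
  · conv_lhs => rw [Ideal.frobeniusPower]
    rw [Ideal.span_le]
    rintro _ ⟨x, hx, rfl⟩
    simp only [SetLike.mem_coe]
    rw [pow_succ, pow_mul]
    exact Ideal.pow_mem_frobeniusPower (Ideal.pow_mem_frobeniusPower hx _) _

lemma finite_quotient_frobeniusPower {k : Type*} [Field k] [Algebra k A] [Algebra.FiniteType k A]
    (J : Ideal A) [Module.Finite k (A ⧸ J)] (q : ℕ) :
    Module.Finite k (A ⧸ J.frobeniusPower q) := by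
  have : Algebra.IsIntegral k (A ⧸ J.frobeniusPower q) := by
    refine ⟨fun x => ?_⟩
    obtain ⟨a, rfl⟩ := Ideal.Quotient.mk_surjective x
    obtain ⟨P, hP, hPa⟩ := Algebra.IsIntegral.isIntegral (R := k) (Ideal.Quotient.mk J a)
    refine ⟨P ^ q, hP.pow q, ?_⟩
    change aeval (Ideal.Quotient.mkₐ k J a) P = 0 at hPa
    change aeval (Ideal.Quotient.mkₐ k _ a) (P ^ q) = 0
    rw [aeval_algHom_apply] at hPa ⊢
    rw [map_pow]
    exact Ideal.Quotient.eq_zero_iff_mem.2 (Ideal.pow_mem_frobeniusPower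
      (Ideal.Quotient.eq_zero_iff_mem.1 hPa) _)
  have : Algebra.FiniteType k (A ⧸ J.frobeniusPower q) :=
    Algebra.FiniteType.of_surjective (Ideal.Quotient.mkₐ k _) (Ideal.Quotient.mkₐ_surjective k _)
  exact Algebra.IsIntegral.finite

end FrobPow

/-! ### Noether normalisation over the integers -/

section Noether
open scoped nonZeroDivisors TensorProduct

lemma isIntegralElem_intCast_mul {S B : Type*} [CommRing S] [CommRing B] (f : S →+* B) {x : B}
    (hx : f.IsIntegralElem x) (n : ℤ) : f.IsIntegralElem ((n : B) * x) := by
  have h : f.IsIntegralElem (n : B) := by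
    rw [← map_intCast f n]
    exact f.isIntegralElem_map
  exact h.mul f hx

attribute [local instance] MvPolynomial.algebraMvPolynomial in
/-- Noether normalisation of the generic fibre, with denominators cleared. -/
lemma exists_noether_of_localization {B Q : Type*} [CommRing B] [CommRing Q] [Algebra B Q]
    [Algebra ℚ Q] [IsLocalization (Algebra.algebraMapSubmonoid B ℤ⁰) Q] [Algebra.FiniteType ℚ Q]
    [Nontrivial Q] :
    ∃ (s : ℕ) (z : Fin s → B), AlgebraicIndependent ℤ z ∧ ∀ w : B, ∃ n : ℤ, n ≠ 0 ∧
      (MvPolynomial.aeval (R := ℤ) z).toRingHom.IsIntegralElem ((n : B) * w) := by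
  obtain ⟨s, g, hginj, hgint⟩ := exists_integral_inj_algHom_of_fg ℚ Q
  obtain ⟨⟨_, n, hn, rfl⟩, hb⟩ := IsLocalization.exist_integer_multiples_of_finite
    (Algebra.algebraMapSubmonoid B ℤ⁰) (fun i => g (MvPolynomial.X i))
  have hn0 : n ≠ 0 := nonZeroDivisors.ne_zero hn
  have hnQ : (n : ℚ) ≠ 0 := by exact_mod_cast hn0
  choose z hz using hb
  -- rescaling of the variables
  let σ : MvPolynomial (Fin s) ℚ ≃ₐ[ℚ] MvPolynomial (Fin s) ℚ := AlgEquiv.ofAlgHom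
    (MvPolynomial.aeval fun i => (n : ℚ) • MvPolynomial.X i)
    (MvPolynomial.aeval fun i => (n : ℚ)⁻¹ • MvPolynomial.X i)
    (by ext i; simp [smul_smul, hnQ]) (by ext i; simp [smul_smul, hnQ])
  let g' : MvPolynomial (Fin s) ℚ →ₐ[ℚ] Q := g.comp σ.toAlgHom
  have hg'inj : Function.Injective g' := hginj.comp σ.injective
  have hg'int : g'.toRingHom.IsIntegral :=
    (RingHom.isIntegral_of_surjective σ.toAlgHom.toRingHom σ.surjective).trans _ _ hgint
  have hg'X : ∀ i, g' (MvPolynomial.X i) = algebraMap B Q (z i) := by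
    intro i
    simp only [g', AlgHom.comp_apply]
    have : σ.toAlgHom (MvPolynomial.X i) = (n : ℚ) • MvPolynomial.X i := by simp [σ]
    rw [this, map_smul, hz i]
    simp only [Algebra.smul_def]
    simp
  have hcomp : g'.toRingHom.comp (MvPolynomial.map (Int.castRingHom ℚ)) =
      (algebraMap B Q).comp (MvPolynomial.aeval (R := ℤ) z).toRingHom := by
    refine MvPolynomial.ringHom_ext (fun r => by simp) fun i => ?_
    simpa using hg'X i
  have hmapinj : Function.Injective (MvPolynomial.map (σ := Fin s) (Int.castRingHom ℚ)) :=
    MvPolynomial.map_injective _ Int.cast_injective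
  refine ⟨s, z, ?_, ?_⟩
  · intro x y hxy
    apply hmapinj
    apply hg'inj
    have h1 := fun t => RingHom.congr_fun hcomp t
    simp only [RingHom.comp_apply] at h1
    have h2 : (MvPolynomial.aeval (R := ℤ) z).toRingHom x =
      (MvPolynomial.aeval (R := ℤ) z).toRingHom y := hxy
    exact (h1 x).trans ((congrArg _ h2).trans (h1 y).symm)
  · intro w
    let S := MvPolynomial (Fin s) ℤ
    let SQ := MvPolynomial (Fin s) ℚ
    let : Algebra S B := (MvPolynomial.aeval (R := ℤ) z).toRingHom.toAlgebra
    let : Algebra SQ Q := g'.toRingHom.toAlgebra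
    let : Algebra S Q := ((algebraMap B Q).comp (MvPolynomial.aeval (R := ℤ) z).toRingHom).toAlgebra
    have : IsScalarTower S B Q := IsScalarTower.of_algebraMap_eq' rfl
    have : IsScalarTower S SQ Q := IsScalarTower.of_algebraMap_eq' hcomp.symm
    let M : Submonoid S := ℤ⁰.map (MvPolynomial.C : ℤ →+* S)
    have hM : Algebra.algebraMapSubmonoid B M = Algebra.algebraMapSubmonoid B ℤ⁰ := by
      have : (algebraMap ℤ B : ℤ →+* B) = (algebraMap S B).comp (MvPolynomial.C : ℤ →+* S) :=
        Subsingleton.elim _ _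
      ext x
      simp [Algebra.algebraMapSubmonoid, M, this]
    have : IsLocalization (Algebra.algebraMapSubmonoid B M) Q := by rw [hM]; infer_instance
    have h1 : IsIntegral SQ (algebraMap B Q w) := hg'int _
    obtain ⟨⟨_, n₁, hn₁, rfl⟩, h2⟩ :=
      IsIntegral.exists_multiple_integral_of_isLocalization (Rₘ := SQ) M _ h1
    have h3 : IsIntegral S (algebraMap B Q ((MvPolynomial.C n₁ : S) • w)) := by
      have h6 : algebraMap B Q ((MvPolynomial.C n₁ : S) • w) =
          (MvPolynomial.C n₁ : S) • algebraMap B Q w := by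
        simp only [Algebra.smul_def, map_mul, ← IsScalarTower.algebraMap_apply]
      rw [h6]
      exact h2
    obtain ⟨_, ⟨n₂, hn₂, rfl⟩, h4⟩ :=
      IsLocalization.exists_isIntegral_smul_of_isIntegral_map M h3
    refine ⟨n₂ * n₁, mul_ne_zero (nonZeroDivisors.ne_zero hn₂) (nonZeroDivisors.ne_zero hn₁), ?_⟩
    have h5 : ((n₂ * n₁ : ℤ) : B) * w = (MvPolynomial.C n₂ : S) • (MvPolynomial.C n₁ : S) • w := by
      simp only [Algebra.smul_def]
      rw [← mul_assoc, ← map_mul, ← map_mul]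
      congr 1
      exact (eq_intCast ((algebraMap S B).comp (MvPolynomial.C : ℤ →+* S)) (n₂ * n₁)).symm
    rw [h5]
    exact h4

/-- Noether normalisation over `ℤ`: after inverting a positive integer `N`, a finitely generated
ring is integral over a polynomial ring over `ℤ`. The elements `z` are algebraically
independent unless there are none of them (which covers the case that `N = 0` in `B`). -/
lemma exists_noether_int (B : Type*) [CommRing B] [Algebra.FiniteType ℤ B] {u : ℕ}
    (w : Fin u → B) :
    ∃ (s : ℕ) (z : Fin s → B) (N : ℕ), N ≠ 0 ∧ (s = 0 ∨ AlgebraicIndependent ℤ z) ∧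
      ∀ i, (MvPolynomial.aeval (R := ℤ) z).toRingHom.IsIntegralElem ((N : B) * w i) := by
  let _ : Algebra B (ℚ ⊗[ℤ] B) := Algebra.TensorProduct.rightAlgebra
  have : IsLocalization (Algebra.algebraMapSubmonoid B ℤ⁰) (ℚ ⊗[ℤ] B) :=
    IsLocalization.tensorRight ℚ ℤ⁰
  rcases subsingleton_or_nontrivial (ℚ ⊗[ℤ] B) with hs | hs
  · have h1 : algebraMap B (ℚ ⊗[ℤ] B) 1 = 0 := Subsingleton.elim _ _
    rw [IsLocalization.map_eq_zero_iff (Algebra.algebraMapSubmonoid B ℤ⁰)] at h1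
    obtain ⟨⟨_, n, hn, rfl⟩, h1⟩ := h1
    have hn0 : n ≠ 0 := nonZeroDivisors.ne_zero hn
    have h2 : ((n.natAbs : ℕ) : B) = 0 := by
      have h3 : (n : B) = 0 := by simpa using h1
      obtain ⟨c, hc⟩ := Int.dvd_natAbs_self (a := n)
      have := congrArg (Int.cast : ℤ → B) hc
      rwa [Int.cast_natCast, Int.cast_mul, h3, zero_mul] at this
    refine ⟨0, Fin.elim0, n.natAbs, Int.natAbs_ne_zero.2 hn0, Or.inl rfl, fun i => ?_⟩
    rw [h2, zero_mul]
    exact RingHom.isIntegralElem_zero _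
  · obtain ⟨s, z, hz, hw⟩ := exists_noether_of_localization (B := B) (Q := ℚ ⊗[ℤ] B)
    choose n hn0 hn using fun i => hw (w i)
    refine ⟨s, z, ∏ i, (n i).natAbs, Finset.prod_ne_zero_iff.2 fun i _ =>
      Int.natAbs_ne_zero.2 (hn0 i), Or.inr hz, fun i => ?_⟩
    have h1 : n i ∣ ((∏ i, (n i).natAbs : ℕ) : ℤ) :=
      (Int.dvd_natCast.2 (Finset.dvd_prod_of_mem _ (Finset.mem_univ i)))
    obtain ⟨c, hc⟩ := h1
    have h2 : ((∏ i, (n i).natAbs : ℕ) : B) * w i = (c : B) * ((n i : B) * w i) := by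
      have := congrArg (Int.cast : ℤ → B) hc
      rw [Int.cast_natCast] at this
      rw [this]
      push_cast
      ring
    rw [h2]
    exact isIntegralElem_intCast_mul _ (hn i) c

end Noether

/-! ### Reduction modulo a prime -/

section Reduction

/-- An injective integral extension preserves the Krull dimension, by lying over, going up and
incomparability. -/
lemma ringKrullDim_eq_of_isIntegral (S B : Type*) [CommRing S] [CommRing B] [Algebra S B]
    [Algebra.IsIntegral S B] [FaithfulSMul S B] : ringKrullDim B = ringKrullDim S := by
  apply le_antisymm
  · refine Order.krullDim_le_of_strictMono (PrimeSpectrum.comap (algebraMap S B)) ?_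
    intro P Q hPQ
    exact Ideal.IsIntegral.comap_lt_comap (R := S) (I := P.asIdeal) (J := Q.asIdeal) hPQ
  · refine iSup_le fun l => ?_
    obtain ⟨P, -, hP, hPl⟩ := Ideal.exists_ideal_over_prime_of_isIntegral
      (S := B) (RelSeries.head l).asIdeal ⊥ (by
        rw [← RingHom.ker_eq_comap_bot,
          (RingHom.injective_iff_ker_eq_bot _).1 (FaithfulSMul.algebraMap_injective S B)]
        exact bot_le)
    have : P.LiesOver (RelSeries.head l).asIdeal := ⟨hPl.symm⟩
    obtain ⟨L, hL, -, -⟩ := Ideal.exists_ltSeries_of_hasGoingUp l P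
    rw [← hL]
    exact Order.LTSeries.length_le_krullDim L

lemma comp_aeval_eq_aeval_comp_map {B A : Type*} [CommRing B] [CommRing A] (p : ℕ)
    [Algebra (ZMod p) A] (φ : B →+* A) {s : ℕ} (z : Fin s → B) :
    φ.comp (MvPolynomial.aeval (R := ℤ) z).toRingHom =
      (MvPolynomial.aeval (R := ZMod p) (φ ∘ z)).toRingHom.comp
        (MvPolynomial.map (Int.castRingHom (ZMod p))) := by
  refine MvPolynomial.ringHom_ext (fun r => by simp) fun i => by simp

lemma eval₂_map_reduction {B A : Type*} [CommRing B] [CommRing A] (p : ℕ) [Algebra (ZMod p) A]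
    (φ : B →+* A) {s : ℕ} (z : Fin s → B) (x : B) (G : (MvPolynomial (Fin s) ℤ)[X]) :
    eval₂ (MvPolynomial.aeval (R := ZMod p) (φ ∘ z)).toRingHom (φ x)
      (G.map (MvPolynomial.map (Int.castRingHom (ZMod p)))) =
      φ (eval₂ (MvPolynomial.aeval (R := ℤ) z).toRingHom x G) := by
  rw [eval₂_map, ← comp_aeval_eq_aeval_comp_map, hom_eval₂]

section
variable {B : Type*} [CommRing B] {s u : ℕ}

/-- If the generators of `B` become integral after multiplication by `N`, then every element does so
after multiplication by a power of `N`. -/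
lemma exists_pow_mul_isIntegralElem (z : Fin s → B) (w : Fin u → B)
    (hw : Algebra.adjoin ℤ (Set.range w) = ⊤) (N : ℕ)
    (hinteg : ∀ i, (MvPolynomial.aeval (R := ℤ) z).toRingHom.IsIntegralElem ((N : B) * w i))
    (b : B) :
    ∃ k : ℕ, (MvPolynomial.aeval (R := ℤ) z).toRingHom.IsIntegralElem ((N : B) ^ k * b) := by
  set f := (MvPolynomial.aeval (R := ℤ) z).toRingHom with hf
  have hN : ∀ k x, f.IsIntegralElem x → f.IsIntegralElem ((N : B) ^ k * x) := by
    intro k x hx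
    have := isIntegralElem_intCast_mul f hx ((N : ℤ) ^ k)
    simpa using this
  have hb : b ∈ Algebra.adjoin ℤ (Set.range w) := by rw [hw]; trivial
  induction hb using Algebra.adjoin_induction with
  | mem x hx =>
    obtain ⟨i, rfl⟩ := hx
    exact ⟨1, by simpa using hinteg i⟩
  | algebraMap r =>
    refine ⟨0, ?_⟩
    have : (N : B) ^ 0 * algebraMap ℤ B r = f (r : MvPolynomial (Fin s) ℤ) := by simp
    rw [this]
    exact f.isIntegralElem_map
  | add x y _ _ hx hy =>
    obtain ⟨k, hk⟩ := hx
    obtain ⟨l, hl⟩ := hy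
    refine ⟨k + l, ?_⟩
    have : (N : B) ^ (k + l) * (x + y) = (N : B) ^ l * ((N : B) ^ k * x) +
        (N : B) ^ k * ((N : B) ^ l * y) := by ring
    rw [this]
    exact (hN _ _ hk).add f (hN _ _ hl)
  | mul x y _ _ hx hy =>
    obtain ⟨k, hk⟩ := hx
    obtain ⟨l, hl⟩ := hy
    refine ⟨k + l, ?_⟩
    have : (N : B) ^ (k + l) * (x * y) = ((N : B) ^ k * x) * ((N : B) ^ l * y) := by ring
    rw [this]
    exact hk.mul f hl

/-- A polynomial in `z` divisible by `p` in `B` has all coefficients divisible by `p`: the quotient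
is integral up to a power of `N`, and `p` is prime in the polynomial ring. -/
lemma C_dvd_of_dvd_aeval (z : Fin s → B) (w : Fin u → B)
    (hw : Algebra.adjoin ℤ (Set.range w) = ⊤) (N : ℕ)
    (hinteg : ∀ i, (MvPolynomial.aeval (R := ℤ) z).toRingHom.IsIntegralElem ((N : B) * w i))
    (hz : AlgebraicIndependent ℤ z) {p : ℕ} (hp : p.Prime) (hpN : ¬ p ∣ N)
    (f : MvPolynomial (Fin s) ℤ) (hf : (p : B) ∣ MvPolynomial.aeval z f) :
    (MvPolynomial.C (p : ℤ) : MvPolynomial (Fin s) ℤ) ∣ f := by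
  obtain ⟨b, hb⟩ := hf
  obtain ⟨k, G, hG, hGb⟩ := exists_pow_mul_isIntegralElem z w hw N hinteg b
  have h1 := dvd_pow_natDegree_of_eval₂_eq_zero
    (f := (MvPolynomial.aeval (R := ℤ) z).toRingHom) hz hG (MvPolynomial.C (p : ℤ))
    (MvPolynomial.C ((N : ℤ) ^ k) * f) _ hGb (by
      simp only [AlgHom.toRingHom_eq_coe, RingHom.coe_coe, map_mul, hb]
      simp
      ring)
  have hprime : Prime (MvPolynomial.C (p : ℤ) : MvPolynomial (Fin s) ℤ) :=
    (MvPolynomial.prime_C_iff _).2 (Nat.prime_iff_prime_int.1 hp)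
  rcases hprime.dvd_or_dvd (hprime.dvd_of_dvd_pow h1) with h | h
  · exfalso
    rw [MvPolynomial.C_dvd_iff_dvd_coeff] at h
    have h2 := h 0
    rw [MvPolynomial.coeff_zero_C] at h2
    have h3 : p ∣ N ^ k := by exact_mod_cast h2
    exact hpN (hp.dvd_of_dvd_pow h3)
  · exact h

variable {A : Type*} [CommRing A] {p : ℕ} [Fact p.Prime] [Algebra (ZMod p) A]

lemma algebraicIndependent_reduction (z : Fin s → B) (w : Fin u → B)
    (hw : Algebra.adjoin ℤ (Set.range w) = ⊤) (N : ℕ)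
    (hinteg : ∀ i, (MvPolynomial.aeval (R := ℤ) z).toRingHom.IsIntegralElem ((N : B) * w i))
    (φ : B →+* A) (hz : AlgebraicIndependent ℤ z) (hpN : ¬ p ∣ N)
    (hφ : ∀ b, φ b = 0 → (p : B) ∣ b) : AlgebraicIndependent (ZMod p) (φ ∘ z) := by
  rw [algebraicIndependent_iff]
  intro F hF
  obtain ⟨f, rfl⟩ := MvPolynomial.map_surjective (Int.castRingHom (ZMod p))
    (ZMod.ringHom_surjective _) F
  have h1 := RingHom.congr_fun (comp_aeval_eq_aeval_comp_map p φ z) f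
  have h2 : φ (MvPolynomial.aeval z f) = 0 := h1.trans hF
  obtain ⟨g, rfl⟩ := C_dvd_of_dvd_aeval z w hw N hinteg hz Fact.out hpN f (hφ _ h2)
  simp

lemma adjoin_reduction (w : Fin u → B)
    (hw : Algebra.adjoin ℤ (Set.range w) = ⊤) (N : ℕ) (φ : B →+* A) (hpN : ¬ p ∣ N)
    (hφ : Function.Surjective φ) :
    Algebra.adjoin (ZMod p) (Set.range fun i => φ ((N : B) * w i)) = ⊤ := by
  rw [eq_top_iff]
  rintro a -
  obtain ⟨b, rfl⟩ := hφ a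
  have hb : b ∈ Algebra.adjoin ℤ (Set.range w) := by rw [hw]; trivial
  induction hb using Algebra.adjoin_induction with
  | mem x hx =>
    obtain ⟨i, rfl⟩ := hx
    have hN0 : (N : ZMod p) ≠ 0 := by rwa [Ne, ZMod.natCast_eq_zero_iff]
    have : φ (w i) = (N : ZMod p)⁻¹ • φ ((N : B) * w i) := by
      rw [map_mul, map_natCast, ← map_natCast (algebraMap (ZMod p) A), ← Algebra.smul_def,
        smul_smul, inv_mul_cancel₀ hN0, one_smul]
    rw [this]
    exact Subalgebra.smul_mem _ (Algebra.subset_adjoin (Set.mem_range_self i)) _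
  | algebraMap r => simp
  | add x y _ _ hx hy => rw [map_add]; exact add_mem hx hy
  | mul x y _ _ hx hy => rw [map_mul]; exact mul_mem hx hy

lemma isIntegral_reduction (z : Fin s → B) (w : Fin u → B)
    (hw : Algebra.adjoin ℤ (Set.range w) = ⊤) (N : ℕ)
    (hinteg : ∀ i, (MvPolynomial.aeval (R := ℤ) z).toRingHom.IsIntegralElem ((N : B) * w i))
    (φ : B →+* A) (hpN : ¬ p ∣ N) (hφ : Function.Surjective φ) :
    (MvPolynomial.aeval (R := ZMod p) (φ ∘ z)).toRingHom.IsIntegral := by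
  let : Algebra (MvPolynomial (Fin s) (ZMod p)) A :=
    (MvPolynomial.aeval (R := ZMod p) (φ ∘ z)).toRingHom.toAlgebra
  have : IsScalarTower (ZMod p) (MvPolynomial (Fin s) (ZMod p)) A :=
    IsScalarTower.of_algebraMap_eq fun r =>
      ((MvPolynomial.aeval (R := ZMod p) (φ ∘ z)).commutes r).symm
  intro a
  change IsIntegral (MvPolynomial (Fin s) (ZMod p)) a
  have ha : a ∈ Algebra.adjoin (ZMod p) (Set.range fun i => φ ((N : B) * w i)) := by
    rw [adjoin_reduction w hw N φ hpN hφ]; trivial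
  induction ha using Algebra.adjoin_induction with
  | mem x hx =>
    obtain ⟨i, rfl⟩ := hx
    obtain ⟨G, hG, hGx⟩ := hinteg i
    refine ⟨G.map (MvPolynomial.map (Int.castRingHom (ZMod p))), hG.map _, ?_⟩
    exact (eval₂_map_reduction p φ z _ G).trans (by rw [hGx, map_zero])
  | algebraMap r =>
    rw [IsScalarTower.algebraMap_apply (ZMod p) (MvPolynomial (Fin s) (ZMod p)) A]
    exact isIntegral_algebraMap
  | add x y _ _ hx hy => exact hx.add hy
  | mul x y _ _ hx hy => exact hx.mul hy

/-- The dimension of a reduction mod `p` is the number of variables of the normalisation. -/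
lemma ringKrullDim_reduction (z : Fin s → B) (w : Fin u → B)
    (hw : Algebra.adjoin ℤ (Set.range w) = ⊤) (N : ℕ)
    (hinteg : ∀ i, (MvPolynomial.aeval (R := ℤ) z).toRingHom.IsIntegralElem ((N : B) * w i))
    (φ : B →+* A) (hz : AlgebraicIndependent ℤ z) (hpN : ¬ p ∣ N)
    (hφ : Function.Surjective φ) (hφ' : ∀ b, φ b = 0 → (p : B) ∣ b) :
    ringKrullDim A = s := by
  let : Algebra (MvPolynomial (Fin s) (ZMod p)) A :=
    (MvPolynomial.aeval (R := ZMod p) (φ ∘ z)).toRingHom.toAlgebra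
  have : FaithfulSMul (MvPolynomial (Fin s) (ZMod p)) A :=
    (faithfulSMul_iff_algebraMap_injective _ _).2
      (algebraicIndependent_reduction z w hw N hinteg φ hz hpN hφ')
  have : Algebra.IsIntegral (MvPolynomial (Fin s) (ZMod p)) A :=
    ⟨isIntegral_reduction z w hw N hinteg φ hpN hφ⟩
  rw [ringKrullDim_eq_of_isIntegral (MvPolynomial (Fin s) (ZMod p)) A,
    MvPolynomial.ringKrullDim_of_isNoetherianRing, ringKrullDim_eq_zero_of_field]
  simp

end
end Reduction

/-! ### The estimate over a fixed prime -/

section Uniform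

/-- In characteristic zero an integral element of a domain over a polynomial ring is a root of a
monic polynomial with nonzero discriminant, namely its minimal polynomial. -/
lemma exists_monic_resultant_ne_zero {R : Type*} [CommRing R] [IsDomain R] {s : ℕ}
    {z : Fin s → R} (hz : AlgebraicIndependent ℤ z) {x : R}
    (hx : (MvPolynomial.aeval (R := ℤ) z).toRingHom.IsIntegralElem x) :
    ∃ g : (MvPolynomial (Fin s) ℤ)[X], g.Monic ∧
      eval₂ (MvPolynomial.aeval (R := ℤ) z).toRingHom x g = 0 ∧
      resultant g (derivative g) g.natDegree (g.natDegree - 1) ≠ 0 := by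
  let : Algebra (MvPolynomial (Fin s) ℤ) R := (MvPolynomial.aeval (R := ℤ) z).toRingHom.toAlgebra
  have : FaithfulSMul (MvPolynomial (Fin s) ℤ) R :=
    (faithfulSMul_iff_algebraMap_injective _ _).2 hz
  have hx' : IsIntegral (MvPolynomial (Fin s) ℤ) x := hx
  refine ⟨minpoly (MvPolynomial (Fin s) ℤ) x, minpoly.monic hx', minpoly.aeval _ _, ?_⟩
  let K := FractionRing (MvPolynomial (Fin s) ℤ)
  let L := FractionRing R
  let : Algebra K L := FractionRing.liftAlgebra _ _
  have hmin := minpoly.isIntegrallyClosed_eq_field_fractions K L hx'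
  have hirr : Irreducible (minpoly K (algebraMap R L x)) :=
    minpoly.irreducible ((hx'.algebraMap (B := L)).tower_top)
  have hsep : (minpoly K (algebraMap R L x)).Separable := hirr.separable
  rw [hmin] at hsep hirr
  set g := minpoly (MvPolynomial (Fin s) ℤ) x with hg
  have hgm : g.Monic := minpoly.monic hx'
  intro h0
  have h1 := congrArg (algebraMap (MvPolynomial (Fin s) ℤ) K) h0
  rw [← resultant_map_map, map_zero, ← derivative_map] at h1
  have hdeg : (derivative (g.map (algebraMap (MvPolynomial (Fin s) ℤ) K))).natDegree =
      g.natDegree - 1 := by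
    rw [natDegree_derivative, hgm.natDegree_map]
  rw [← hdeg, ← hgm.natDegree_map (algebraMap (MvPolynomial (Fin s) ℤ) K)] at h1
  exact resultant_ne_zero _ _ hsep h1

/-- Comparison of the colengths of consecutive Frobenius powers in a domain `A` over `ZMod p`, with an
error term depending only on the shape of the following data: algebraically independent `z` over
which `A` is integral, with equations `g` of the generators `v` and product `c` of discriminants;
equations `G` of generators `v'` of `A` over elements `y` modulo `c`; equations `P` of `v'` over
`ZMod p` modulo `J`. -/
lemma abs_finrank_frobeniusPower_sub_le (p : ℕ) [Fact p.Prime] {A : Type*} [CommRing A] [IsDomain A]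
    [Algebra (ZMod p) A] [CharP A p] {d u s' : ℕ} (z : Fin d → A)
    (hz : AlgebraicIndependent (ZMod p) z) (v : Fin u → A)
    (hv : Algebra.adjoin (ZMod p) (Set.range v) = ⊤)
    (hinteg : (MvPolynomial.aeval (R := ZMod p) z).toRingHom.IsIntegral)
    (g : Fin u → (MvPolynomial (Fin d) (ZMod p))[X]) (hg : ∀ i, (g i).Monic)
    (hgv : ∀ i, eval₂ (MvPolynomial.aeval (R := ZMod p) z).toRingHom (v i) (g i) = 0)
    (hdisc : ∏ i, resultant (g i) (derivative (g i)) (g i).natDegree ((g i).natDegree - 1) ≠ 0)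
    (J : Ideal A) [Module.Finite (ZMod p) (A ⧸ J)]
    (v' : Fin u → A) (hv' : Algebra.adjoin (ZMod p) (Set.range v') = ⊤)
    (y : Fin s' → A) (hs' : s' ≤ d - 1) (hd : 1 ≤ d)
    (G : Fin u → (MvPolynomial (Fin s') (ZMod p))[X]) (hG : ∀ i, (G i).Monic) {E h h₁ : ℕ}
    (hE : ∀ i j, ((G i).coeff j).totalDegree ≤ E) (hh : ∀ i, (G i).natDegree ≤ h)
    (hGv : ∀ i, eval₂ (MvPolynomial.aeval (R := ZMod p) y).toRingHom (v' i) (G i) ∈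
      Ideal.span {MvPolynomial.aeval z (∏ i, resultant (g i) (derivative (g i)) (g i).natDegree
        ((g i).natDegree - 1))})
    (P : Fin u → (ZMod p)[X]) (hP : ∀ i, (P i).Monic) (hPh : ∀ i, (P i).natDegree ≤ h₁)
    (hPv : ∀ i, aeval (v' i) (P i) ∈ J) (n : ℕ) :
    |(Module.finrank (ZMod p) (A ⧸ J.frobeniusPower (p ^ (n + 1))) : ℝ) -
      (p : ℝ) ^ d * Module.finrank (ZMod p) (A ⧸ J.frobeniusPower (p ^ n))| ≤
      ((u * h₁ * E + 1) ^ (d - 1) * h ^ u : ℕ) * (p : ℝ) ^ d * (p : ℝ) ^ (n * (d - 1)) := by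
  have hpp : p.Prime := Fact.out
  let : Algebra (MvPolynomial (Fin d) (ZMod p)) A :=
    (MvPolynomial.aeval (R := ZMod p) z).toRingHom.toAlgebra
  have : IsScalarTower (ZMod p) (MvPolynomial (Fin d) (ZMod p)) A :=
    IsScalarTower.of_algebraMap_eq fun r => ((MvPolynomial.aeval (R := ZMod p) z).commutes r).symm
  have : FaithfulSMul (MvPolynomial (Fin d) (ZMod p)) A :=
    (faithfulSMul_iff_algebraMap_injective _ _).2 hz
  have : Algebra.FiniteType (ZMod p) A :=
    ⟨⟨(Set.finite_range v).toFinset, by simpa using hv⟩⟩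
  have : Algebra.FiniteType (MvPolynomial (Fin d) (ZMod p)) A :=
    Algebra.FiniteType.of_restrictScalars_finiteType (ZMod p) _ _
  have : Algebra.IsIntegral (MvPolynomial (Fin d) (ZMod p)) A := ⟨hinteg⟩
  have : Module.Finite (MvPolynomial (Fin d) (ZMod p)) A := Algebra.IsIntegral.finite
  set c₀ := ∏ i, resultant (g i) (derivative (g i)) (g i).natDegree ((g i).natDegree - 1) with hc₀
  have hmem := prod_disc_pow_mul_mem p v hv g hg hgv
  rw [← hc₀] at hmem
  have hinj := frobMap_varImage_injective p c₀ hdisc hmem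
  set c : A := algebraMap (MvPolynomial (Fin d) (ZMod p)) A c₀ with hc
  have hfinF : ∀ q, Module.Finite (ZMod p) (A ⧸ J.frobeniusPower q) := fun q =>
    finite_quotient_frobeniusPower J q
  set K := u * h₁ * E + 1 with hK
  -- the bound on the colength of `J^{[q]} + (c)`
  have key : ∀ n, Module.finrank (ZMod p) (A ⧸ J.frobeniusPower (p ^ n) ⊔ Ideal.span {c}) ≤
      K ^ (d - 1) * h ^ u * p ^ (n * (d - 1)) := by
    intro n
    set 𝔞 := J.frobeniusPower (p ^ n) ⊔ Ideal.span {c} with h𝔞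
    let π := Ideal.Quotient.mkₐ (ZMod p) 𝔞
    have hπ : Function.Surjective π := Ideal.Quotient.mkₐ_surjective _ _
    have h1 := finrank_le_of_relations (k := ZMod p) (Q := A ⧸ 𝔞) (fun i => π (v' i))
      (by
        have : Set.range (fun i => π (v' i)) = π '' Set.range v' := by
          rw [← Set.range_comp]; rfl
        rw [this, ← AlgHom.map_adjoin, hv', Algebra.map_top]
        exact (AlgHom.range_eq_top _).2 hπ)
      P hP (q := p ^ n) hPh
      (fun i => by
        rw [aeval_algHom_apply, ← map_pow]
        refine Ideal.Quotient.eq_zero_iff_mem.2 ?_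
        exact Ideal.mem_sup_left (Ideal.pow_mem_frobeniusPower (hPv i) _))
      (fun i => π (y i)) G hG hE hh
      (fun i => by
        have h2 : (MvPolynomial.aeval (R := ZMod p) fun i => π (y i)).toRingHom =
            (π : A →+* A ⧸ 𝔞).comp (MvPolynomial.aeval (R := ZMod p) y).toRingHom := by
          refine MvPolynomial.ringHom_ext (fun r => by simp) fun i => by simp
        rw [h2]
        change eval₂ _ ((π : A →+* A ⧸ 𝔞) (v' i)) (G i) = 0
        rw [← hom_eval₂]
        exact Ideal.Quotient.eq_zero_iff_mem.2 (Ideal.mem_sup_right (hGv i)))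
    refine h1.trans ?_
    have hq : 1 ≤ p ^ n := Nat.one_le_pow _ _ hpp.pos
    have h3 : u * (p ^ n * h₁ * E) + 1 ≤ p ^ n * K := by
      rw [hK]; nlinarith
    have h4 : (u * (p ^ n * h₁ * E) + 1) ^ s' ≤ (p ^ n * K) ^ (d - 1) :=
      (Nat.pow_le_pow_left h3 _).trans (Nat.pow_le_pow_right (by positivity) hs')
    calc (u * (p ^ n * h₁ * E) + 1) ^ s' * h ^ u ≤ (p ^ n * K) ^ (d - 1) * h ^ u :=
          Nat.mul_le_mul_right _ h4
      _ = K ^ (d - 1) * h ^ u * p ^ (n * (d - 1)) := by rw [mul_pow, ← pow_mul]; ring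
  have hFF := Ideal.frobeniusPower_frobeniusPower p J n
  have := hfinF (p ^ n)
  have : Module.Finite (ZMod p) (A ⧸ (J.frobeniusPower (p ^ n)).frobeniusPower p) := by
    rw [hFF]; exact hfinF _
  have hup := finrank_quotient_frobeniusPower_le p _ c hmem (J.frobeniusPower (p ^ n))
  have hlo := le_finrank_quotient_frobeniusPower p _ c hmem hinj (J.frobeniusPower (p ^ n))
  rw [hFF] at hup hlo
  have hup' := hup.trans (Nat.add_le_add_left (Nat.mul_le_mul_left p (key (n + 1))) _)
  have hlo' := hlo.trans (Nat.add_le_add_left (Nat.mul_le_mul_left (p ^ d) (key n)) _)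
  have hpd : p * (K ^ (d - 1) * h ^ u * p ^ ((n + 1) * (d - 1))) =
      K ^ (d - 1) * h ^ u * p ^ d * p ^ (n * (d - 1)) := by
    obtain ⟨e, rfl⟩ : ∃ e, d = e + 1 := ⟨d - 1, by omega⟩
    simp only [Nat.add_sub_cancel]
    ring
  rw [hpd] at hup'
  have hup'' : (Module.finrank (ZMod p) (A ⧸ J.frobeniusPower (p ^ (n + 1))) : ℝ) ≤
      (p : ℝ) ^ d * Module.finrank (ZMod p) (A ⧸ J.frobeniusPower (p ^ n)) +
      (K ^ (d - 1) * h ^ u : ℕ) * (p : ℝ) ^ d * (p : ℝ) ^ (n * (d - 1)) := by exact_mod_cast hup'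
  have hlo'' : (p : ℝ) ^ d * Module.finrank (ZMod p) (A ⧸ J.frobeniusPower (p ^ n)) ≤
      (Module.finrank (ZMod p) (A ⧸ J.frobeniusPower (p ^ (n + 1))) : ℝ) +
      (p : ℝ) ^ d * ((K ^ (d - 1) * h ^ u : ℕ) * (p : ℝ) ^ (n * (d - 1))) := by exact_mod_cast hlo'
  rw [abs_le]
  constructor <;> linarith

end Uniform

/-! ### Uniformity in the prime -/

section Fibers

lemma finiteType_int_of_surjective {R B : Type*} [CommRing R] [CommRing B] [Algebra.FiniteType ℤ R]
    (f : R →+* B) (hf : Function.Surjective f) : Algebra.FiniteType ℤ B :=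
  Algebra.FiniteType.of_surjective f.toIntAlgHom hf

lemma quotientMap_eq_zero {R A : Type*} [CommRing R] [CommRing A] {p : ℕ} (φ : R →+* A)
    (hφ : Function.Surjective φ) (hφ' : ∀ b, φ b = 0 → (p : R) ∣ b) (𝔠 : Ideal R) (b : R ⧸ 𝔠)
    (hb : Ideal.quotientMap (𝔠.map φ) φ Ideal.le_comap_map b = 0) : (p : R ⧸ 𝔠) ∣ b := by
  obtain ⟨r, rfl⟩ := Ideal.Quotient.mk_surjective b
  rw [Ideal.quotientMap_mk, Ideal.Quotient.eq_zero_iff_mem,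
    Ideal.mem_map_iff_of_surjective φ hφ] at hb
  obtain ⟨x, hx, hxr⟩ := hb
  obtain ⟨t, ht⟩ := hφ' (r - x) (by rw [map_sub, hxr, sub_self])
  refine ⟨Ideal.Quotient.mk 𝔠 t, ?_⟩
  have h1 := congrArg (Ideal.Quotient.mk 𝔠) ht
  rw [map_sub, Ideal.Quotient.eq_zero_iff_mem.2 hx, sub_zero] at h1
  simpa using h1

/-- The number of variables in a normalisation of `R ⧸ 𝔠` is the dimension of `A ⧸ 𝔠 A` for a
reduction `A` of `R` modulo a prime not dividing the denominator `N`. -/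
lemma ringKrullDim_quotient_reduction {R A : Type*} [CommRing R] [CommRing A] {p : ℕ}
    [Fact p.Prime] [Algebra (ZMod p) A] (φ : R →+* A) (hφ : Function.Surjective φ)
    (hφ' : ∀ b, φ b = 0 → (p : R) ∣ b) {u s : ℕ} (w : Fin u → R)
    (hw : Algebra.adjoin ℤ (Set.range w) = ⊤) (𝔠 : Ideal R) (z : Fin s → R ⧸ 𝔠)
    (hz : AlgebraicIndependent ℤ z) (N : ℕ)
    (hinteg : ∀ i, (MvPolynomial.aeval (R := ℤ) z).toRingHom.IsIntegralElem
      ((N : R ⧸ 𝔠) * Ideal.Quotient.mk 𝔠 (w i)))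
    (hpN : ¬ p ∣ N) : ringKrullDim (A ⧸ 𝔠.map φ) = s := by
  refine ringKrullDim_reduction (p := p) z (fun i => Ideal.Quotient.mk 𝔠 (w i)) ?_ N hinteg
    (Ideal.quotientMap (𝔠.map φ) φ Ideal.le_comap_map) hz hpN
    (Ideal.quotientMap_surjective hφ) (quotientMap_eq_zero φ hφ hφ' 𝔠)
  have : (Set.range fun i => Ideal.Quotient.mk 𝔠 (w i)) =
      (Ideal.Quotient.mk 𝔠).toIntAlgHom '' Set.range w := by
    rw [← Set.range_comp]; rfl
  rw [this, ← AlgHom.map_adjoin, hw, Algebra.map_top]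
  exact (AlgHom.range_eq_top _).2 Ideal.Quotient.mk_surjective

/-- Integral equations over a quotient lift to monic equations holding modulo the ideal. -/
lemma exists_monic_eval₂_mem {R : Type*} [CommRing R] (𝔠 : Ideal R) {s : ℕ} (z : Fin s → R)
    {x : R} (hx : (MvPolynomial.aeval (R := ℤ)
      fun i => Ideal.Quotient.mk 𝔠 (z i)).toRingHom.IsIntegralElem (Ideal.Quotient.mk 𝔠 x)) :
    ∃ G : (MvPolynomial (Fin s) ℤ)[X], G.Monic ∧
      eval₂ (MvPolynomial.aeval (R := ℤ) z).toRingHom x G ∈ 𝔠 := by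
  obtain ⟨G, hG, h⟩ := hx
  refine ⟨G, hG, ?_⟩
  have h2 : (MvPolynomial.aeval (R := ℤ) fun i => Ideal.Quotient.mk 𝔠 (z i)).toRingHom =
      (Ideal.Quotient.mk 𝔠).comp (MvPolynomial.aeval (R := ℤ) z).toRingHom := by
    refine MvPolynomial.ringHom_ext (fun r => by simp) fun i => by simp
  rw [h2, ← hom_eval₂] at h
  exact Ideal.Quotient.eq_zero_iff_mem.1 h

lemma totalDegree_map_le {S T σ : Type*} [CommSemiring S] [CommSemiring T] (f : S →+* T)
    (F : MvPolynomial σ S) : (MvPolynomial.map f F).totalDegree ≤ F.totalDegree :=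
  Finset.sup_mono (MvPolynomial.support_map_subset f F)

lemma exists_totalDegree_bound {u s : ℕ} (G : Fin u → (MvPolynomial (Fin s) ℤ)[X]) :
    ∃ E, ∀ i j, ((G i).coeff j).totalDegree ≤ E := by
  refine ⟨Finset.univ.sup fun i => (G i).support.sup fun j => ((G i).coeff j).totalDegree, ?_⟩
  intro i j
  by_cases hj : j ∈ (G i).support
  · exact (Finset.le_sup (f := fun j => ((G i).coeff j).totalDegree) hj).trans
      (Finset.le_sup (f := fun i => (G i).support.sup fun j => ((G i).coeff j).totalDegree)
        (Finset.mem_univ i))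
  · rw [notMem_support_iff.1 hj]; simp

lemma exists_natDegree_bound {u : ℕ} {S : Type*} [Semiring S] (G : Fin u → S[X]) :
    ∃ h, ∀ i, (G i).natDegree ≤ h :=
  ⟨Finset.univ.sup fun i => (G i).natDegree,
    fun i => Finset.le_sup (f := fun i => (G i).natDegree) (Finset.mem_univ i)⟩

lemma map_intCast_ne_zero {s : ℕ} {F : MvPolynomial (Fin s) ℤ} (hF : F ≠ 0) :
    ∃ M, ∀ p, M < p → MvPolynomial.map (Int.castRingHom (ZMod p)) F ≠ 0 := by
  obtain ⟨a, ha⟩ := MvPolynomial.ne_zero_iff.1 hF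
  refine ⟨(F.coeff a).natAbs, fun p hp h0 => ?_⟩
  have h1 := congrArg (MvPolynomial.coeff a) h0
  rw [MvPolynomial.coeff_map, MvPolynomial.coeff_zero, eq_intCast,
    ZMod.intCast_zmod_eq_zero_iff_dvd] at h1
  have h2 := Nat.le_of_dvd (Int.natAbs_pos.2 ha) (Int.natCast_dvd.1 h1)
  omega

lemma fiberColength_eq {R : Type*} [CommRing R] (p : ℕ) [h : CharP (modPFiber R p) p]
    (J : Ideal (modPFiber R p)) :
    letI : Algebra (ZMod p) (modPFiber R p) := ZMod.algebra _ p
    fiberColength p J = Module.finrank (ZMod p) (modPFiber R p ⧸ J) := by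
  unfold fiberColength
  rw [dif_pos h]

/-- `R_p` embeds into its base change to the algebraic closure. -/
lemma isDomain_of_modPFiberGeomIntegral {R : Type*} [CommRing R] (p : ℕ) [Fact p.Prime]
    [CharP (modPFiber R p) p] (h : ModPFiberGeomIntegral R p) : IsDomain (modPFiber R p) := by
  let : Algebra (ZMod p) (modPFiber R p) := ZMod.algebra _ p
  have : IsDomain (TensorProduct (ZMod p) (AlgebraicClosure (ZMod p)) (modPFiber R p)) := h
  exact (Algebra.TensorProduct.includeRight_injective (R := ZMod p)
    (A := AlgebraicClosure (ZMod p)) (B := modPFiber R p)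
    (algebraMap (ZMod p) (AlgebraicClosure (ZMod p))).injective).isDomain
    (Algebra.TensorProduct.includeRight (R := ZMod p)
    (A := AlgebraicClosure (ZMod p)) (B := modPFiber R p)).toRingHom

/-- The comparison of consecutive colengths for a reduction `φ : R → A` modulo `p`, in terms of
integral equations over `ℤ` that do not depend on `p`. -/
lemma abs_finrank_frobeniusPower_map_sub_le {R A : Type*} [CommRing R] [CommRing A] [IsDomain A]
    (p : ℕ) [Fact p.Prime] [Algebra (ZMod p) A] [CharP A p] (φ : R →+* A)
    (hφ : Function.Surjective φ) (hφ' : ∀ b, φ b = 0 → (p : R) ∣ b) {d u s' : ℕ} (hd : 1 ≤ d)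
    (w : Fin u → R) (hw : Algebra.adjoin ℤ (Set.range w) = ⊤)
    (z : Fin d → R) (hz : AlgebraicIndependent ℤ z) (Na : ℕ) (hpNa : ¬ p ∣ Na)
    (hinteg : ∀ i, (MvPolynomial.aeval (R := ℤ) z).toRingHom.IsIntegralElem ((Na : R) * w i))
    (g : Fin u → (MvPolynomial (Fin d) ℤ)[X]) (hg : ∀ i, (g i).Monic)
    (hgz : ∀ i, eval₂ (MvPolynomial.aeval (R := ℤ) z).toRingHom ((Na : R) * w i) (g i) = 0)
    (hdisc : MvPolynomial.map (Int.castRingHom (ZMod p)) (∏ i, resultant (g i) (derivative (g i))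
      (g i).natDegree ((g i).natDegree - 1)) ≠ 0)
    (I : Ideal R) (hfin : Module.Finite (ZMod p) (A ⧸ I.map φ)) (N : ℕ) (hpN : ¬ p ∣ N)
    (y : Fin s' → R) (hs' : s' ≤ d - 1)
    (G : Fin u → (MvPolynomial (Fin s') ℤ)[X]) (hG : ∀ i, (G i).Monic) {E h h₁ : ℕ}
    (hE : ∀ i j, ((G i).coeff j).totalDegree ≤ E) (hh : ∀ i, (G i).natDegree ≤ h)
    (hGy : ∀ i, eval₂ (MvPolynomial.aeval (R := ℤ) y).toRingHom ((N : R) * w i) (G i) ∈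
      Ideal.span {MvPolynomial.aeval z (∏ i, resultant (g i) (derivative (g i)) (g i).natDegree
        ((g i).natDegree - 1))})
    (x : Fin 0 → R) (P : Fin u → (MvPolynomial (Fin 0) ℤ)[X]) (hP : ∀ i, (P i).Monic)
    (hPh : ∀ i, (P i).natDegree ≤ h₁)
    (hPx : ∀ i, eval₂ (MvPolynomial.aeval (R := ℤ) x).toRingHom ((N : R) * w i) (P i) ∈ I)
    (n : ℕ) :
    |(Module.finrank (ZMod p) (A ⧸ (I.map φ).frobeniusPower (p ^ (n + 1))) : ℝ) -
      (p : ℝ) ^ d * Module.finrank (ZMod p) (A ⧸ (I.map φ).frobeniusPower (p ^ n))| ≤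
      ((u * h₁ * E + 1) ^ (d - 1) * h ^ u : ℕ) * (p : ℝ) ^ d * (p : ℝ) ^ (n * (d - 1)) := by
  set F : MvPolynomial (Fin d) ℤ :=
    ∏ i, resultant (g i) (derivative (g i)) (g i).natDegree ((g i).natDegree - 1) with hF
  have hFρ : ∏ i, resultant ((g i).map (MvPolynomial.map (Int.castRingHom (ZMod p))))
      (derivative ((g i).map (MvPolynomial.map (Int.castRingHom (ZMod p)))))
      ((g i).map (MvPolynomial.map (Int.castRingHom (ZMod p)))).natDegree
      (((g i).map (MvPolynomial.map (Int.castRingHom (ZMod p)))).natDegree - 1) =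
      MvPolynomial.map (Int.castRingHom (ZMod p)) F := by
    rw [hF, map_prod]
    refine Finset.prod_congr rfl fun i _ => ?_
    rw [(hg i).natDegree_map, derivative_map, resultant_map_map]
  -- polynomials in no variables are constants
  let κ : MvPolynomial (Fin 0) (ZMod p) →+* ZMod p :=
    (MvPolynomial.isEmptyRingEquiv (ZMod p) (Fin 0)).toRingHom
  have hκC : ∀ r, κ (MvPolynomial.C r) = r := fun r =>
    (MvPolynomial.isEmptyRingEquiv (ZMod p) (Fin 0)).apply_symm_apply r
  have hκ : (MvPolynomial.aeval (R := ZMod p) (φ ∘ x)).toRingHom =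
      (algebraMap (ZMod p) A).comp κ := by
    refine MvPolynomial.ringHom_ext (fun r => ?_) fun i => i.elim0
    rw [RingHom.comp_apply, hκC]
    exact MvPolynomial.aeval_C _ r
  have hred : MvPolynomial.aeval (R := ZMod p) (φ ∘ z)
      (MvPolynomial.map (Int.castRingHom (ZMod p)) F) = φ (MvPolynomial.aeval z F) :=
    (RingHom.congr_fun (comp_aeval_eq_aeval_comp_map p φ z) F).symm
  refine abs_finrank_frobeniusPower_sub_le p (φ ∘ z)
    (algebraicIndependent_reduction z w hw Na hinteg φ hz hpNa hφ')
    (fun i => φ ((Na : R) * w i)) (adjoin_reduction w hw Na φ hpNa hφ)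
    (isIntegral_reduction z w hw Na hinteg φ hpNa hφ)
    (fun i => (g i).map (MvPolynomial.map (Int.castRingHom (ZMod p)))) (fun i => (hg i).map _)
    (fun i => by rw [eval₂_map_reduction, hgz, map_zero])
    (by rw [hFρ]; exact hdisc) (I.map φ)
    (fun i => φ ((N : R) * w i)) (adjoin_reduction w hw N φ hpN hφ)
    (φ ∘ y) hs' hd (fun i => (G i).map (MvPolynomial.map (Int.castRingHom (ZMod p))))
    (fun i => (hG i).map _) (E := E) (h := h) (h₁ := h₁)
    (fun i j => by
      rw [coeff_map]; exact (totalDegree_map_le _ _).trans (hE i j))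
    (fun i => natDegree_map_le.trans (hh i))
    (fun i => by
      rw [hFρ, eval₂_map_reduction, hred, ← Set.image_singleton, ← Ideal.map_span]
      exact Ideal.mem_map_of_mem _ (hGy i))
    (fun i => ((P i).map (MvPolynomial.map (Int.castRingHom (ZMod p)))).map κ)
    (fun i => ((hP i).map _).map _)
    (fun i => natDegree_map_le.trans (natDegree_map_le.trans (hPh i)))
    (fun i => by
      rw [aeval_def, eval₂_map, ← hκ, eval₂_map_reduction]
      exact Ideal.mem_map_of_mem _ (hPx i)) n

lemma isIntegralElem_mk_mul {R S : Type*} [CommRing R] [CommRing S] (𝔠 : Ideal R)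
    (f : S →+* R ⧸ 𝔠) {x : R} {a N : ℕ}
    (h : f.IsIntegralElem ((a : R ⧸ 𝔠) * Ideal.Quotient.mk 𝔠 x)) (haN : a ∣ N) :
    f.IsIntegralElem (Ideal.Quotient.mk 𝔠 ((N : R) * x)) := by
  obtain ⟨b, rfl⟩ := haN
  have h1 := isIntegralElem_intCast_mul f h (b : ℤ)
  have h2 : Ideal.Quotient.mk 𝔠 (((a * b : ℕ) : R) * x) =
      ((b : ℤ) : R ⧸ 𝔠) * ((a : R ⧸ 𝔠) * Ideal.Quotient.mk 𝔠 x) := by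
    rw [map_mul, map_natCast]
    push_cast
    ring
  rwa [h2]

set_option maxHeartbeats 1000000 in
/-- The colength of `I_p^{[p^{n+1}]}` is `p ^ d` times that of `I_p^{[p^n]}`, up to an error of at
most `C · p ^ d · p ^ (n (d - 1))` with `C` independent of `p` and `n`: `C` is read off from integral equations of `R/(c)` and `R/I` over `ℤ[1/N]`. -/
theorem exists_uniform_colength_bound (R : Type*) [CommRing R] [IsDomain R] [CharZero R]
    [Algebra.FiniteType ℤ R] (I : Ideal R) (d : ℕ) (hd : 1 ≤ d) (N₀ : ℕ)
    (hchar : ∀ p : ℕ, p.Prime → N₀ ≤ p → CharP (modPFiber R p) p)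
    (hdom : ∀ p : ℕ, p.Prime → N₀ ≤ p → IsDomain (modPFiber R p))
    (hdim : ∀ p : ℕ, p.Prime → N₀ ≤ p → ringKrullDim (modPFiber R p) = d)
    (hfin : ∀ p : ℕ, (hp : p.Prime) → (hN : N₀ ≤ p) →
      haveI := hchar p hp hN
      letI : Algebra (ZMod p) (modPFiber R p) := ZMod.algebra _ p
      Module.Finite (ZMod p) (modPFiber R p ⧸ modPFiberIdeal I p)) :
    ∃ C N₁ : ℕ, N₀ ≤ N₁ ∧ ∀ p : ℕ, p.Prime → N₁ ≤ p → ∀ n : ℕ,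
      |(fiberColength p ((modPFiberIdeal I p).frobeniusPower (p ^ (n + 1))) : ℝ) -
        (p : ℝ) ^ d * fiberColength p ((modPFiberIdeal I p).frobeniusPower (p ^ n))| ≤
        C * (p : ℝ) ^ d * (p : ℝ) ^ (n * (d - 1)) := by
  have hndvd : ∀ {N p : ℕ}, N ≠ 0 → N < p → ¬ p ∣ N := fun hN hlt h =>
    absurd (Nat.le_of_dvd (Nat.pos_of_ne_zero hN) h) (by omega)
  have hker : ∀ (p : ℕ) (b : R), Ideal.Quotient.mk (Ideal.span {(p : R)}) b = 0 → (p : R) ∣ b :=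
    fun p b hb => Ideal.mem_span_singleton.1 (Ideal.Quotient.eq_zero_iff_mem.1 hb)
  -- generators of `R`
  obtain ⟨u, f, hf⟩ := Algebra.FiniteType.iff_quotient_mvPolynomial''.1
    (inferInstance : Algebra.FiniteType ℤ R)
  set w : Fin u → R := fun i => f (MvPolynomial.X i) with hwdef
  have hw : Algebra.adjoin ℤ (Set.range w) = ⊤ := by
    have : Set.range w = f '' Set.range MvPolynomial.X := by rw [← Set.range_comp]; rfl
    rw [this, ← AlgHom.map_adjoin, MvPolynomial.adjoin_range_X, Algebra.map_top]
    exact (AlgHom.range_eq_top _).2 hf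
  -- normalisation of `R`
  obtain ⟨s, z, Na, hNa, hza, hinta⟩ := exists_noether_int R w
  have hz : AlgebraicIndependent ℤ z := by
    rcases hza with rfl | h
    · exact algebraicIndependent_empty_type_iff.2 (algebraMap ℤ R).injective_int
    · exact h
  obtain rfl : s = d := by
    obtain ⟨p, hpge, hp⟩ := Nat.exists_infinite_primes (N₀ + Na + 1)
    have : Fact p.Prime := ⟨hp⟩
    have := hchar p hp (by omega)
    let : Algebra (ZMod p) (modPFiber R p) := ZMod.algebra _ p
    have h1 := ringKrullDim_reduction (p := p) z w hw Na hinta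
      (Ideal.Quotient.mk (Ideal.span {(p : R)})) hz (hndvd hNa (by omega))
      Ideal.Quotient.mk_surjective (hker p)
    have h2 := h1.symm.trans (hdim p hp (by omega))
    exact_mod_cast h2
  choose g hgm hgz hgr using fun i => exists_monic_resultant_ne_zero hz (hinta i)
  set F : MvPolynomial (Fin s) ℤ :=
    ∏ i, resultant (g i) (derivative (g i)) (g i).natDegree ((g i).natDegree - 1) with hF
  have hF0 : F ≠ 0 := Finset.prod_ne_zero_iff.2 fun i _ => hgr i
  obtain ⟨M, hM⟩ := map_intCast_ne_zero hF0
  set c : R := MvPolynomial.aeval z F with hc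
  have hred : ∀ (p : ℕ) [Fact p.Prime] [CharP (modPFiber R p) p],
      letI : Algebra (ZMod p) (modPFiber R p) := ZMod.algebra _ p
      MvPolynomial.aeval (R := ZMod p) (Ideal.Quotient.mk (Ideal.span {(p : R)}) ∘ z)
        (MvPolynomial.map (Int.castRingHom (ZMod p)) F) =
        Ideal.Quotient.mk (Ideal.span {(p : R)}) c := by
    intro p _ _
    let : Algebra (ZMod p) (modPFiber R p) := ZMod.algebra _ p
    exact (RingHom.congr_fun (comp_aeval_eq_aeval_comp_map p
      (Ideal.Quotient.mk (Ideal.span {(p : R)})) z) F).symm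
  have halg : ∀ (p : ℕ) [Fact p.Prime] [CharP (modPFiber R p) p], Na < p →
      letI : Algebra (ZMod p) (modPFiber R p) := ZMod.algebra _ p
      AlgebraicIndependent (ZMod p) (Ideal.Quotient.mk (Ideal.span {(p : R)}) ∘ z) := by
    intro p _ _ hp
    let : Algebra (ZMod p) (modPFiber R p) := ZMod.algebra _ p
    exact algebraicIndependent_reduction z w hw Na hinta _ hz (hndvd hNa hp) (hker p)
  -- normalisation of `R / (c)`
  have := finiteType_int_of_surjective (Ideal.Quotient.mk (Ideal.span {c}))
    Ideal.Quotient.mk_surjective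
  obtain ⟨s', y, Nb, hNb, hyb, hintb⟩ := exists_noether_int (R ⧸ Ideal.span {c})
    fun i => Ideal.Quotient.mk _ (w i)
  have hs' : s' ≤ s - 1 := by
    rcases hyb with rfl | hy
    · omega
    obtain ⟨p, hpge, hp⟩ := Nat.exists_infinite_primes (N₀ + Na + Nb + M + 1)
    have : Fact p.Prime := ⟨hp⟩
    have := hchar p hp (by omega)
    have := hdom p hp (by omega)
    let : Algebra (ZMod p) (modPFiber R p) := ZMod.algebra _ p
    have h1 := ringKrullDim_quotient_reduction (p := p) (Ideal.Quotient.mk (Ideal.span {(p : R)}))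
      Ideal.Quotient.mk_surjective (hker p) w hw (Ideal.span {c}) y hy Nb hintb
      (hndvd hNb (by omega))
    have hcne : Ideal.Quotient.mk (Ideal.span {(p : R)}) c ≠ 0 := by
      rw [← hred p]
      intro h0
      exact hM p (by omega) ((halg p (by omega)).eq_zero_of_aeval_eq_zero _ h0)
    have h2 := ringKrullDim_succ_le_of_surjective
      (Ideal.Quotient.mk ((Ideal.span {c}).map (Ideal.Quotient.mk (Ideal.span {(p : R)}))))
      Ideal.Quotient.mk_surjective (mem_nonZeroDivisors_of_ne_zero hcne)
      (Ideal.Quotient.eq_zero_iff_mem.2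
        (Ideal.mem_map_of_mem _ (Ideal.mem_span_singleton_self c)))
    rw [h1, hdim p hp (by omega)] at h2
    have h3 : s' + 1 ≤ s := by exact_mod_cast h2
    omega
  -- normalisation of `R / I`
  have := finiteType_int_of_surjective (Ideal.Quotient.mk I) Ideal.Quotient.mk_surjective
  obtain ⟨t, x, Nc, hNc, hxc, hintc⟩ := exists_noether_int (R ⧸ I)
    fun i => Ideal.Quotient.mk _ (w i)
  obtain rfl : t = 0 := by
    rcases hxc with rfl | hx
    · rfl
    obtain ⟨p, hpge, hp⟩ := Nat.exists_infinite_primes (N₀ + Nc + 1)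
    have : Fact p.Prime := ⟨hp⟩
    have := hchar p hp (by omega)
    let : Algebra (ZMod p) (modPFiber R p) := ZMod.algebra _ p
    have h1 : ringKrullDim (modPFiber R p ⧸ modPFiberIdeal I p) = t :=
      ringKrullDim_quotient_reduction (p := p) (Ideal.Quotient.mk (Ideal.span {(p : R)}))
      Ideal.Quotient.mk_surjective (hker p) w hw I x hx Nc hintc (hndvd hNc (by omega))
    have : Module.Finite (ZMod p) (modPFiber R p ⧸ modPFiberIdeal I p) := hfin p hp (by omega)
    have : IsArtinianRing (modPFiber R p ⧸ modPFiberIdeal I p) :=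
      IsArtinianRing.of_finite (ZMod p) _
    have h2 := (Ring.krullDimLE_iff (R := modPFiber R p ⧸ modPFiberIdeal I p) (n := 0)).1
      inferInstance
    rw [h1] at h2
    have h3 : t ≤ 0 := by exact_mod_cast h2
    omega
  -- a common denominator for the last two normalisations
  set N := Nb * Nc with hN
  have hN0 : N ≠ 0 := mul_ne_zero hNb hNc
  choose y' hy' using fun i => Ideal.Quotient.mk_surjective (I := Ideal.span {c}) (y i)
  choose x' hx' using fun i => Ideal.Quotient.mk_surjective (I := I) (x i)
  obtain rfl : (fun i => Ideal.Quotient.mk (Ideal.span {c}) (y' i)) = y := funext hy'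
  obtain rfl : (fun i => Ideal.Quotient.mk I (x' i)) = x := funext hx'
  choose G hGm hGy using fun i => exists_monic_eval₂_mem (Ideal.span {c}) y'
    (x := (N : R) * w i) (isIntegralElem_mk_mul _ _ (hintb i) (Dvd.intro _ rfl))
  choose P hPm hPx using fun i => exists_monic_eval₂_mem I x'
    (x := (N : R) * w i) (isIntegralElem_mk_mul _ _ (hintc i) (Dvd.intro_left _ rfl))
  obtain ⟨E, hE⟩ := exists_totalDegree_bound G
  obtain ⟨h, hh⟩ := exists_natDegree_bound G
  obtain ⟨h₁, hh₁⟩ := exists_natDegree_bound P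
  refine ⟨(u * h₁ * E + 1) ^ (s - 1) * h ^ u, N₀ + Na + N + M + 1, by omega, ?_⟩
  intro p hp hpge n
  have : Fact p.Prime := ⟨hp⟩
  have := hchar p hp (by omega)
  have := hdom p hp (by omega)
  let : Algebra (ZMod p) (modPFiber R p) := ZMod.algebra _ p
  have : Module.Finite (ZMod p) (modPFiber R p ⧸ modPFiberIdeal I p) := hfin p hp (by omega)
  rw [fiberColength_eq, fiberColength_eq]
  exact abs_finrank_frobeniusPower_map_sub_le p (Ideal.Quotient.mk (Ideal.span {(p : R)}))
    Ideal.Quotient.mk_surjective (hker p) hd w hw z hz Na (hndvd hNa (by omega)) hinta g hgm hgz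
    (hM p (by omega)) I this N (hndvd hN0 (by omega)) y' hs' G hGm hE hh hGy x' P hPm hh₁ hPx n

end Fibers

/-! ### Passage to the limit -/

section Limit

/-- Consecutive normalised colengths differ by at most `C / pⁿ`; summing a geometric series bounds
the distance from the `m`-th one to the limit. -/
lemma abs_sub_le_of_recursion {a : ℕ → ℝ} {e C : ℝ} {p d : ℕ} (hp : 2 ≤ p) (hd : 1 ≤ d)
    (hC : 0 ≤ C)
    (ha : ∀ n, |a (n + 1) - (p : ℝ) ^ d * a n| ≤ C * (p : ℝ) ^ d * (p : ℝ) ^ (n * (d - 1)))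
    (he : Tendsto (fun n => a n / (p : ℝ) ^ (n * d)) atTop (nhds e)) {m : ℕ} (hm : 1 ≤ m) :
    |e - a m / (p : ℝ) ^ (m * d)| ≤ 2 * C / p := by
  have hp2 : (2 : ℝ) ≤ p := by exact_mod_cast hp
  have hp0 : (0 : ℝ) < p := by linarith
  have hstep : ∀ n, dist (a n / (p : ℝ) ^ (n * d)) (a (n + 1) / (p : ℝ) ^ ((n + 1) * d)) ≤
      C * (p : ℝ)⁻¹ ^ n := by
    intro n
    have hP : (0 : ℝ) < (p : ℝ) ^ ((n + 1) * d) := by positivity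
    have h1 : a (n + 1) / (p : ℝ) ^ ((n + 1) * d) - a n / (p : ℝ) ^ (n * d) =
        (a (n + 1) - (p : ℝ) ^ d * a n) / (p : ℝ) ^ ((n + 1) * d) := by
      rw [add_mul, one_mul, pow_add]
      field_simp
    rw [dist_comm, Real.dist_eq, h1, abs_div, abs_of_pos hP, div_le_iff₀ hP]
    refine (ha n).trans (le_of_eq ?_)
    obtain ⟨k, rfl⟩ : ∃ k, d = k + 1 := ⟨d - 1, by omega⟩
    rw [Nat.add_sub_cancel, inv_pow]
    field_simp
    ring
  have hr : (p : ℝ)⁻¹ ≤ 1 / 2 := by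
    rw [one_div]; exact inv_anti₀ (by norm_num) hp2
  have h2 := dist_le_of_le_geometric_of_tendsto (p : ℝ)⁻¹ C (by linarith) hstep he m
  rw [dist_comm, Real.dist_eq] at h2
  refine h2.trans ?_
  have hr0 : (0 : ℝ) ≤ (p : ℝ)⁻¹ := by positivity
  have h3 : (p : ℝ)⁻¹ ^ m ≤ (p : ℝ)⁻¹ := pow_le_of_le_one hr0 (by linarith) (by omega)
  rw [div_le_iff₀ (by linarith)]
  have h4 : C * (p : ℝ)⁻¹ ^ m ≤ C * (p : ℝ)⁻¹ := by gcongr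
  have h5 : 2 * C / p * (1 - (p : ℝ)⁻¹) = C * (p : ℝ)⁻¹ * (2 * (1 - (p : ℝ)⁻¹)) := by
    rw [div_eq_mul_inv]; ring
  rw [h5]
  have h6 : 0 ≤ C * (p : ℝ)⁻¹ := by positivity
  nlinarith

lemma tendstoPrimes_iff_of_sub {f g : ℕ → ℝ} (h : TendstoPrimes (fun p => f p - g p) 0) (L : ℝ) :
    TendstoPrimes f L ↔ TendstoPrimes g L := by
  constructor <;> intro hL ε hε
  all_goals
    obtain ⟨N, hN⟩ := h (ε / 2) (by linarith)
    obtain ⟨N', hN'⟩ := hL (ε / 2) (by linarith)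
    refine ⟨max N N', fun p hp hpN => ?_⟩
    have h1 := abs_lt.1 (hN p hp (le_trans (le_max_left _ _) hpN))
    have h2 := abs_lt.1 (hN' p hp (le_trans (le_max_right _ _) hpN))
    rw [abs_lt]
    constructor <;> linarith [h1.1, h1.2, h2.1, h2.2]

end Limit

end HilbertKunz

theorem fiber_eHK_limit_eq_fiber_colength_limit
    (R : Type*) [CommRing R] [IsDomain R] [CharZero R]
    (hfg : Algebra.FiniteType ℤ R)
    (𝒜 : ℕ → Submodule ℤ R) [GradedAlgebra 𝒜]
    -- `R` is generated in degree 1 over `R₀`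
    (hgen : Algebra.adjoin ℤ ((𝒜 0 : Set R) ∪ (𝒜 1 : Set R)) = ⊤)
    (I : Ideal R) (hIhom : I.IsHomogeneous 𝒜) (hIne : I ≠ ⊤)
    (d : ℕ) (hd : 2 ≤ d)
    -- for almost all primes `p` (say `p ≥ N₀`) the fiber `R_p` has
    -- characteristic `p`, is a standard graded ring of dimension `d` which is
    -- geometrically integral, and `I_p ⊂ R_p` has finite colength:
    (N₀ : ℕ)
    (hchar : ∀ p : ℕ, p.Prime → N₀ ≤ p → CharP (modPFiber R p) p)
    (hstd : ∀ p : ℕ, (hp : p.Prime) → (hN : N₀ ≤ p) →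
      IsField (Subring.closure ((Ideal.Quotient.mk _) '' (𝒜 0 : Set R)) :
        Subring (modPFiber R p)))
    (hdim : ∀ p : ℕ, (hp : p.Prime) → (hN : N₀ ≤ p) →
      ringKrullDim (modPFiber R p) = d)
    (hgeom : ∀ p : ℕ, (hp : p.Prime) → (hN : N₀ ≤ p) →
      haveI : Fact p.Prime := ⟨hp⟩
      haveI := hchar p hp hN
      ModPFiberGeomIntegral R p)
    (hfin : ∀ p : ℕ, (hp : p.Prime) → (hN : N₀ ≤ p) →
      haveI := hchar p hp hN
      letI : Algebra (ZMod p) (modPFiber R p) := ZMod.algebra _ p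
      Module.Finite (ZMod p) (modPFiber R p ⧸ modPFiberIdeal I p))
    -- `eHK p` is the Hilbert–Kunz multiplicity of `(R_p, I_p)` for almost all `p`
    (eHK : ℕ → ℝ)
    (heHK : ∀ p : ℕ, p.Prime → N₀ ≤ p →
      Tendsto
        (fun n : ℕ =>
          (fiberColength p ((modPFiberIdeal I p).frobeniusPower (p ^ n)) : ℝ) /
            (p : ℝ) ^ (n * d))
        atTop (nhds (eHK p)))
    (m : ℕ) (hm : d - 1 ≤ m) :
    -- `lim_{p→∞} (e_HK(R_p,I_p) − ℓ(R_p/I_p^{[pᵐ]})/p^{md}) = 0` …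
    TendstoPrimes
      (fun p =>
        eHK p -
          (fiberColength p ((modPFiberIdeal I p).frobeniusPower (p ^ m)) : ℝ) /
            (p : ℝ) ^ (m * d)) 0 ∧
    -- … hence the two limits exist simultaneously and are then equal
    (∀ L : ℝ,
      TendstoPrimes eHK L ↔
        TendstoPrimes
          (fun p =>
            (fiberColength p ((modPFiberIdeal I p).frobeniusPower (p ^ m)) : ℝ) /
              (p : ℝ) ^ (m * d)) L) := by
  obtain ⟨C, N₁, hN₁, hC⟩ := exists_uniform_colength_bound R I d (by omega) N₀ hchar
    (fun p hp hN => by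
      have : Fact p.Prime := ⟨hp⟩
      have := hchar p hp hN
      exact isDomain_of_modPFiberGeomIntegral p (hgeom p hp hN))
    hdim hfin
  have hlim : TendstoPrimes (fun p => eHK p -
      (fiberColength p ((modPFiberIdeal I p).frobeniusPower (p ^ m)) : ℝ) /
        (p : ℝ) ^ (m * d)) 0 := by
    intro ε hε
    obtain ⟨M, hM⟩ := exists_nat_gt (2 * (C : ℝ) / ε)
    refine ⟨max N₁ M, fun p hp hpN => ?_⟩
    have hpN₁ : N₁ ≤ p := (le_max_left _ _).trans hpN
    have hpM : (M : ℝ) ≤ p := by exact_mod_cast (le_max_right _ _).trans hpN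
    have hp0 : (0 : ℝ) < p := by exact_mod_cast hp.pos
    have h1 := abs_sub_le_of_recursion (C := (C : ℝ)) hp.two_le (by omega) (by positivity)
      (hC p hp hpN₁) (heHK p hp (hN₁.trans hpN₁)) (m := m) (by omega)
    rw [sub_zero]
    refine h1.trans_lt ?_
    rw [div_lt_iff₀ hp0]
    rw [div_lt_iff₀ hε] at hM
    nlinarith
  exact ⟨hlim, fun L => tendstoPrimes_iff_of_sub hlim L⟩
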